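/- arXiv:2002.02749 — 9 statements merged into one kernel-verified Lean document; each statement's English description precedes it below -/
import Mathlib

section
/- A feasible b-matching f is a maximum b-matching if and only if there is no feasible b-matching f' with x_i(f') ≥ x_i(f) for every vertex i and x_i(f') > x_i(f) for at least one vertex i. (That is, the Pareto optimal feasible b-matchings are exactly the maximum b-matchings.) -/
variable {V : Type*} [Fintype V] [DecidableEq V]

/-- The utility of vertex `i` under the b-matching `f`: the total weight of edges incident to `i`. -/
def bmUtil (G : SimpleGraph V) [DecidableRel G.Adj] (f : Sym2 V → ℕ) (i : V) : ℕ :=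
  ∑ e ∈ G.edgeFinset.filter (fun e => i ∈ e), f e

/-- `f` is a feasible b-matching for `(G, b)`. -/
def BMFeasible (G : SimpleGraph V) [DecidableRel G.Adj] (b : V → ℕ) (f : Sym2 V → ℕ) : Prop :=
  ∀ i, bmUtil G f i ≤ b i

/-- The size of a b-matching: the total weight over all edges. -/
def bmSize (G : SimpleGraph V) [DecidableRel G.Adj] (f : Sym2 V → ℕ) : ℕ :=
  ∑ e ∈ G.edgeFinset, f e

/-- `f` is a maximum b-matching for `(G, b)`. -/
def IsMaxBM (G : SimpleGraph V) [DecidableRel G.Adj] (b : V → ℕ) (f : Sym2 V → ℕ) : Prop :=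
  BMFeasible G b f ∧ ∀ g, BMFeasible G b g → bmSize G g ≤ bmSize G f

/-- Underdemanded vertices: unsaturated in at least one maximum b-matching. -/
def VU (G : SimpleGraph V) [DecidableRel G.Adj] (b : V → ℕ) : Set V :=
  {i | ∃ f, IsMaxBM G b f ∧ bmUtil G f i < b i}

/-- Overdemanded vertices: not underdemanded, with at least one underdemanded neighbor. -/
def VO (G : SimpleGraph V) [DecidableRel G.Adj] (b : V → ℕ) : Set V :=
  {i | i ∉ VU G b ∧ ∃ j ∈ VU G b, G.Adj i j}

/-- Perfectly demanded vertices. -/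
def VP (G : SimpleGraph V) [DecidableRel G.Adj] (b : V → ℕ) : Set V :=
  {i | i ∉ VU G b ∧ i ∉ VO G b}

theorem aux_sum_add (S : Finset (Sym2 V)) (h : Sym2 V → ℕ) (e : Sym2 V) :
    ∑ x ∈ S, (h + Pi.single e 1 : Sym2 V → ℕ) x = ∑ x ∈ S, h x + if e ∈ S then 1 else 0 := by
  simp [Finset.sum_add_distrib, Pi.single_apply]

theorem aux_util_add (G : SimpleGraph V) [DecidableRel G.Adj] (h : Sym2 V → ℕ) (e : Sym2 V)
    (he : e ∈ G.edgeFinset) (v : V) :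
    bmUtil G (h + Pi.single e 1) v = bmUtil G h v + if v ∈ e then 1 else 0 := by
  unfold bmUtil
  rw [aux_sum_add]
  simp only [Finset.mem_filter, he, true_and]

theorem aux_size_add (G : SimpleGraph V) [DecidableRel G.Adj] (h : Sym2 V → ℕ) (e : Sym2 V)
    (he : e ∈ G.edgeFinset) :
    bmSize G (h + Pi.single e 1) = bmSize G h + 1 := by
  unfold bmSize
  rw [aux_sum_add, if_pos he]

theorem aux_sum_util (G : SimpleGraph V) [DecidableRel G.Adj] (h : Sym2 V → ℕ) :
    ∑ i, bmUtil G h i = 2 * bmSize G h := by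
  unfold bmUtil bmSize
  simp only [Finset.sum_filter]
  rw [Finset.sum_comm, Finset.mul_sum]
  refine Finset.sum_congr rfl fun e he => ?_
  induction e using Sym2.ind with
  | _ x y =>
    have hxy : x ≠ y := by
      rw [SimpleGraph.mem_edgeFinset, SimpleGraph.mem_edgeSet] at he
      exact he.ne
    rw [← Finset.sum_filter]
    have : Finset.univ.filter (fun i => i ∈ s(x, y)) = {x, y} := by
      ext i; simp
    rw [this, Finset.sum_pair hxy]
    ring

theorem aux_main (G : SimpleGraph V) [DecidableRel G.Adj] (b : V → ℕ)
    (f : Sym2 V → ℕ) (hf : BMFeasible G b f) (n : ℕ) :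
    ∀ h, BMFeasible G b h → bmSize G f < bmSize G h →
      ∑ e ∈ G.edgeFinset, (f e - h e) = n →
      ∃ g, BMFeasible G b g ∧ bmSize G f < bmSize G g ∧
        ∀ i, bmUtil G f i ≤ bmUtil G g i := by
  induction n using Nat.strong_induction_on with
  | _ n ih =>
    intro h hh hs hn
    by_cases hall : ∀ i, bmUtil G f i ≤ bmUtil G h i
    · exact ⟨h, hh, hs, hall⟩
    push Not at hall
    obtain ⟨i, hi⟩ := hall
    obtain ⟨e, he, hlt⟩ := Finset.exists_lt_of_sum_lt hi
    rw [Finset.mem_filter] at he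
    obtain ⟨heE, hie⟩ := he
    obtain ⟨j, rfl⟩ := hie
    have hij : i ≠ j := by
      have := heE
      rw [SimpleGraph.mem_edgeFinset, SimpleGraph.mem_edgeSet] at this
      exact this.ne
    by_cases hj : bmUtil G h j < b j
    · refine ih _ ?_ (h + Pi.single s(i, j) 1) ?_ ?_ rfl
      · rw [← hn]
        refine Finset.sum_lt_sum (fun x _ => ?_) ⟨s(i, j), heE, ?_⟩
        · simp only [Pi.add_apply]; omega
        · simp only [Pi.add_apply, Pi.single_eq_same]; omega
      · intro v
        rw [aux_util_add G h _ heE]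
        have h1 := hh v
        have h2 := hf i
        split_ifs with hv
        · rcases Sym2.mem_iff.1 hv with rfl | rfl <;> omega
        · omega
      · rw [aux_size_add G h _ heE]; omega
    · have hjf : bmUtil G f j ≤ bmUtil G h j := (hf j).trans (not_lt.1 hj)
      have hex : ∃ e' ∈ G.edgeFinset.filter (fun e => j ∈ e), f e' < h e' := by
        by_contra hcon
        push Not at hcon
        have : bmUtil G h j < bmUtil G f j :=
          Finset.sum_lt_sum hcon ⟨s(i, j), by
            rw [Finset.mem_filter]; exact ⟨heE, Sym2.mem_mk_right i j⟩, hlt⟩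
        omega
      obtain ⟨e', he', hlt'⟩ := hex
      rw [Finset.mem_filter] at he'
      obtain ⟨heE', hje'⟩ := he'
      have hne : e' ≠ s(i, j) := by
        rintro rfl; omega
      have hie' : i ∉ e' := fun hc => hne ((Sym2.mem_and_mem_iff hij).1 ⟨hc, hje'⟩)
      obtain ⟨h1, rfl⟩ : ∃ h1 : Sym2 V → ℕ, h = h1 + (Pi.single e' 1 : Sym2 V → ℕ) := by
        refine ⟨h - (Pi.single e' 1 : Sym2 V → ℕ), ?_⟩
        funext x
        by_cases hx : x = e'
        · subst hx
          simp only [Pi.add_apply, Pi.sub_apply, Pi.single_eq_same]; omega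
        · simp [Pi.single_eq_of_ne hx]
      refine ih _ ?_ (h1 + Pi.single s(i, j) 1) ?_ ?_ rfl
      · rw [← hn]
        simp only [Pi.add_apply, Pi.single_eq_same, Pi.single_eq_of_ne hne.symm] at hlt hlt'
        refine Finset.sum_lt_sum (fun x _ => ?_) ⟨s(i, j), heE, ?_⟩
        · by_cases hx : x = e'
          · subst hx
            simp only [Pi.add_apply, Pi.single_eq_same, Pi.single_eq_of_ne hne]; omega
          · simp only [Pi.add_apply, Pi.single_eq_of_ne hx]; omega
        · simp only [Pi.add_apply, Pi.single_eq_same, Pi.single_eq_of_ne hne.symm]; omega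
      · intro v
        have h3 := hh v
        have h2 := hf i
        rw [aux_util_add G h1 _ heE'] at h3 hi
        rw [if_neg hie'] at hi
        rw [aux_util_add G h1 _ heE]
        by_cases hv : v ∈ s(i, j)
        · rw [if_pos hv]
          rcases Sym2.mem_iff.1 hv with rfl | rfl
          · omega
          · rw [if_pos hje'] at h3; omega
        · rw [if_neg hv]; omega
      · rw [aux_size_add G h1 _ heE'] at hs
        rw [aux_size_add G h1 _ heE]; exact hs

/-- a feasible b-matching is maximum iff it is Pareto optimal. -/
theorem stmt_2 (G : SimpleGraph V) [DecidableRel G.Adj] (b : V → ℕ)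
    (f : Sym2 V → ℕ) (hf : BMFeasible G b f) :
    IsMaxBM G b f ↔
      ¬ ∃ g, BMFeasible G b g ∧ (∀ i, bmUtil G f i ≤ bmUtil G g i) ∧
        (∃ i, bmUtil G f i < bmUtil G g i) := by
  constructor
  · rintro ⟨_, hmax⟩ ⟨g, hg, hle, i, hi⟩
    have h1 := hmax g hg
    have h2 : ∑ i, bmUtil G f i < ∑ i, bmUtil G g i :=
      Finset.sum_lt_sum (fun i _ => hle i) ⟨i, Finset.mem_univ i, hi⟩
    rw [aux_sum_util, aux_sum_util] at h2
    omega
  · intro hp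
    refine ⟨hf, fun h hh => ?_⟩
    by_contra hlt
    obtain ⟨g, hg, hs, hle⟩ := aux_main G b f hf _ h hh (not_le.1 hlt) rfl
    refine hp ⟨g, hg, hle, ?_⟩
    by_contra hcon
    push Not at hcon
    have h2 : ∑ i, bmUtil G g i ≤ ∑ i, bmUtil G f i :=
      Finset.sum_le_sum fun i _ => hcon i
    rw [aux_sum_util, aux_sum_util] at h2
    omega
end

section
/- For every maximum b-matching f, every vertex i ∈ V^O, and every edge {i,j} of G with f({i,j}) > 0, the other endpoint j belongs to V^U. (Overdemanded vertices exchange only with underdemanded vertices in every Pareto-efficient b-matching.) -/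
variable {V : Type*} [Fintype V] [DecidableEq V]

/-- Add one unit on `a`, remove one unit on `r`. -/
def bmSw (f : Sym2 V → ℕ) (a r : Sym2 V) : Sym2 V → ℕ :=
  fun x => (f x + if x = a then 1 else 0) - if x = r then 1 else 0

lemma bmSw_add (f : Sym2 V → ℕ) (a r : Sym2 V) (hr : 0 < f r) (x : Sym2 V) :
    bmSw f a r x + (if x = r then 1 else 0) = f x + if x = a then 1 else 0 := by
  unfold bmSw
  by_cases h : x = r
  · subst h; simp; omega
  · simp [h]

lemma bmSw_sum (f : Sym2 V → ℕ) (a r : Sym2 V) (hr : 0 < f r) (S : Finset (Sym2 V)) :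
    ∑ x ∈ S, bmSw f a r x + (if r ∈ S then 1 else 0)
      = ∑ x ∈ S, f x + if a ∈ S then 1 else 0 := by
  have := Finset.sum_congr (rfl : S = S) (fun x _ => bmSw_add f a r hr x)
  rw [Finset.sum_add_distrib, Finset.sum_add_distrib] at this
  simpa using this

lemma bm_swap (G : SimpleGraph V) [DecidableRel G.Adj] (b : V → ℕ)
    (f : Sym2 V → ℕ) (hf : IsMaxBM G b f) (k y z : V) (hky : G.Adj k y) (hyz : G.Adj y z)
    (hkz : k ≠ z) (hk : bmUtil G f k < b k) (hpos : 0 < f s(y, z)) :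
    IsMaxBM G b (bmSw f s(k, y) s(y, z)) ∧ bmUtil G (bmSw f s(k, y) s(y, z)) z < b z := by
  have hu : ∀ v, bmUtil G (bmSw f s(k, y) s(y, z)) v + (if v = y ∨ v = z then 1 else 0)
      = bmUtil G f v + (if v = k ∨ v = y then 1 else 0) := by
    intro v
    have := bmSw_sum f s(k, y) s(y, z) hpos (G.edgeFinset.filter (fun e => v ∈ e))
    simpa [bmUtil, hky, hyz] using this
  have hs : bmSize G (bmSw f s(k, y) s(y, z)) = bmSize G f := by
    have := bmSw_sum f s(k, y) s(y, z) hpos G.edgeFinset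
    simpa [bmSize, hky, hyz] using this
  have h1 := hky.ne
  have h2 := hyz.ne
  refine ⟨⟨?_, ?_⟩, ?_⟩
  · intro v
    have h3 := hu v
    have h4 := hf.1 v
    by_cases hvk : v = k
    · subst hvk; simp [h1, hkz] at h3; omega
    · by_cases hvy : v = y
      · subst hvy; simp at h3; omega
      · simp [hvk, hvy] at h3; split_ifs at h3 <;> omega
  · intro g hg
    rw [hs]; exact hf.2 g hg
  · have h3 := hu z
    have h4 := hf.1 z
    simp [hkz.symm, h2.symm] at h3
    omega

lemma bm_main (G : SimpleGraph V) [DecidableRel G.Adj] (b : V → ℕ)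
    (f : Sym2 V → ℕ) (hf : IsMaxBM G b f) : ∀ (n : ℕ) (g : Sym2 V → ℕ) (k : V),
    ∑ e ∈ G.edgeFinset, (f e - g e) = n → IsMaxBM G b g → bmUtil G g k < b k →
    ∃ f', IsMaxBM G b f' ∧ bmUtil G f' k < b k ∧
      (∀ e ∈ G.edgeFinset, min (f e) (g e) ≤ f' e ∧ f' e ≤ max (f e) (g e)) ∧
      (∀ u v, G.Adj u v → f' s(u, v) < f s(u, v) → u ∈ VU G b ∨ v ∈ VU G b) := by
  intro n
  induction n using Nat.strong_induction_on with
  | _ n ih =>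
  intro g k hn hg hk
  by_cases hfk : bmUtil G f k < b k
  · exact ⟨f, hf, hfk, fun e _ => ⟨min_le_left _ _, le_max_left _ _⟩,
      fun u v _ h => absurd h (lt_irrefl _)⟩
  -- an edge at `k` where `f` exceeds `g`
  obtain ⟨y, hky, hfg⟩ : ∃ y, G.Adj k y ∧ g s(k, y) < f s(k, y) := by
    have hlt : bmUtil G g k < bmUtil G f k := by omega
    obtain ⟨e, he, hlt⟩ := Finset.exists_lt_of_sum_lt hlt
    rw [Finset.mem_filter, SimpleGraph.mem_edgeFinset] at he
    obtain ⟨he, y, rfl⟩ := he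
    exact ⟨y, he, hlt⟩
  have hyU : bmUtil G g y = b y := by
    by_contra hne
    have hy : bmUtil G g y < b y := lt_of_le_of_ne (hg.1 y) hne
    let g' : Sym2 V → ℕ := fun x => g x + if x = s(k, y) then 1 else 0
    have hsum : ∀ S : Finset (Sym2 V), ∑ x ∈ S, g' x
        = ∑ x ∈ S, g x + if s(k, y) ∈ S then 1 else 0 := by
      intro S; simp [g', Finset.sum_add_distrib]
    have hfeas : BMFeasible G b g' := by
      intro v
      have h3 := hsum (G.edgeFinset.filter (fun e => v ∈ e))
      have h4 := hg.1 v
      unfold bmUtil at *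
      rw [h3]
      by_cases hvk : v = k
      · subst hvk; split_ifs <;> omega
      · by_cases hvy : v = y
        · subst hvy; split_ifs <;> omega
        · simp [hvk, hvy]; exact h4
    have h5 := hg.2 g' hfeas
    have h6 := hsum G.edgeFinset
    simp [hky] at h6
    unfold bmSize at h5
    omega
  obtain ⟨z, hyz, hgf⟩ : ∃ z, G.Adj y z ∧ f s(y, z) < g s(y, z) := by
    by_contra hcon
    push Not at hcon
    have hlt : bmUtil G g y < bmUtil G f y := by
      apply Finset.sum_lt_sum
      · intro e he
        rw [Finset.mem_filter, SimpleGraph.mem_edgeFinset] at he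
        obtain ⟨he, z, rfl⟩ := he
        exact hcon z he
      · exact ⟨s(k, y), by simp [hky], hfg⟩
    have := hf.1 y
    omega
  have hkz : k ≠ z := by
    rintro rfl
    rw [Sym2.eq_swap] at hgf
    omega
  have hne : s(k, y) ≠ s(y, z) := by
    intro h; rw [h] at hfg; omega
  obtain ⟨hg1, hz1⟩ := bm_swap G b g hg k y z hky hyz hkz hk (by omega)
  have hadd := bmSw_add g s(k, y) s(y, z) (by omega)
  set g1 := bmSw g s(k, y) s(y, z) with hg1def
  have hgky := hadd s(k, y)
  have hgyz := hadd s(y, z)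
  simp only [if_true, if_neg hne, if_neg hne.symm] at hgky hgyz
  have hgo : ∀ e, e ≠ s(k, y) → e ≠ s(y, z) → g1 e = g e := by
    intro e h1 h2
    have := hadd e
    simpa [h1, h2] using this
  have hdec : ∑ e ∈ G.edgeFinset, (f e - g1 e) < n := by
    rw [← hn]
    apply Finset.sum_lt_sum
    · intro e _
      by_cases h1 : e = s(k, y)
      · subst h1; omega
      · by_cases h2 : e = s(y, z)
        · subst h2; omega
        · rw [hgo e h1 h2]
    · exact ⟨s(k, y), by simp [hky], by omega⟩
  obtain ⟨f', hf', hf'z, hbet, hVU⟩ := ih _ hdec g1 z rfl hg1 hz1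
  have b1 := hbet s(k, y) (by simp [hky])
  have b2 := hbet s(y, z) (by simp [hyz])
  have hp : 0 < f' s(k, y) := by omega
  obtain ⟨hm, hmk⟩ := bm_swap G b f' hf' z y k hyz.symm hky.symm hkz.symm hf'z
    (by rw [Sym2.eq_swap]; exact hp)
  rw [Sym2.eq_swap (a := z), Sym2.eq_swap (a := y) (b := k)] at hm hmk
  have hadd2 := bmSw_add f' s(y, z) s(k, y) hp
  set f2 := bmSw f' s(y, z) s(k, y) with hf2
  have hfky := hadd2 s(k, y)
  have hfyz := hadd2 s(y, z)
  simp only [if_true, if_neg hne, if_neg hne.symm] at hfky hfyz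
  have hfo : ∀ e, e ≠ s(k, y) → e ≠ s(y, z) → f2 e = f' e := by
    intro e h1 h2
    have := hadd2 e
    simpa [h1, h2] using this
  refine ⟨f2, hm, hmk, ?_, ?_⟩
  · intro e he
    by_cases h1 : e = s(k, y)
    · subst h1; omega
    · by_cases h2 : e = s(y, z)
      · subst h2; omega
      · rw [hfo e h1 h2, ← hgo e h1 h2]; exact hbet e he
  · intro u v huv hlt
    have hkU : k ∈ VU G b := ⟨g, hg, hk⟩
    by_cases h1 : s(u, v) = s(k, y)
    · rcases Sym2.eq_iff.1 h1 with ⟨rfl, _⟩ | ⟨_, rfl⟩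
      · exact Or.inl hkU
      · exact Or.inr hkU
    · by_cases h2 : s(u, v) = s(y, z)
      · rw [h2] at hlt; omega
      · rw [hfo _ h1 h2] at hlt
        exact hVU u v huv hlt

/-- in every maximum b-matching, overdemanded vertices exchange only with
underdemanded vertices. -/
theorem stmt_4 (G : SimpleGraph V) [DecidableRel G.Adj] (b : V → ℕ)
    (f : Sym2 V → ℕ) (hf : IsMaxBM G b f) (i j : V) (hi : i ∈ VO G b)
    (hadj : G.Adj i j) (hpos : 0 < f s(i, j)) : j ∈ VU G b := by
  obtain ⟨hiU, k, ⟨g, hg, hgk⟩, hik⟩ := hi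
  by_cases hkj : k = j
  · subst hkj; exact ⟨g, hg, hgk⟩
  obtain ⟨f', hf', hk, -, hVU⟩ := bm_main G b f hf _ g k rfl hg hgk
  by_cases hlt : f' s(i, j) < f s(i, j)
  · exact (hVU i j hadj hlt).resolve_left hiU
  · obtain ⟨h1, h2⟩ := bm_swap G b f' hf' k i j hik.symm hadj hkj hk (by omega)
    exact ⟨_, h1, h2⟩
end

section
/- Let J be the vertex set of a connected component of the subgraph of G induced on V^U, with |J| ≥ 2. Then Σ_{j ∈ J} b_j is odd, and for every i ∈ J there exists a feasible b-matching f supported only on edges of G with both endpoints in J such that x_j(f) = b_j for every j ∈ J \ {i} and x_i(f) = b_i − 1. -/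
variable {V : Type*} [Fintype V] [DecidableEq V]

/-- The unit b-matching on the edge `e`. -/
def bmOne (e : Sym2 V) : Sym2 V → ℕ := fun e' => if e' = e then 1 else 0

lemma bmUtil_add_one (G : SimpleGraph V) [DecidableRel G.Adj] (f : Sym2 V → ℕ) (e : Sym2 V)
    (he : e ∈ G.edgeFinset) (i : V) :
    bmUtil G (f + bmOne e) i = bmUtil G f i + if i ∈ e then 1 else 0 := by
  unfold bmUtil bmOne
  simp only [Pi.add_apply, Finset.sum_add_distrib, Finset.sum_ite_eq', Finset.mem_filter]
  simp only [he, true_and]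

lemma bmSize_add_one (G : SimpleGraph V) [DecidableRel G.Adj] (f : Sym2 V → ℕ) (e : Sym2 V)
    (he : e ∈ G.edgeFinset) :
    bmSize G (f + bmOne e) = bmSize G f + 1 := by
  unfold bmSize bmOne
  simp only [Pi.add_apply, Finset.sum_add_distrib, Finset.sum_ite_eq']
  simp only [he, if_true]

lemma bm_split (f : Sym2 V → ℕ) (e : Sym2 V) (he : 0 < f e) : ∃ h, f = h + bmOne e := by
  refine ⟨fun e' => f e' - bmOne e e', ?_⟩
  funext e'
  simp only [Pi.add_apply, bmOne]
  split_ifs with h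
  · subst h; omega
  · omega

lemma bm_exists_edge (G : SimpleGraph V) [DecidableRel G.Adj] (f g : Sym2 V → ℕ) (i : V)
    (h : bmUtil G f i < bmUtil G g i) :
    ∃ y, G.Adj i y ∧ f s(i, y) < g s(i, y) := by
  obtain ⟨e, he, hlt⟩ := Finset.exists_lt_of_sum_lt h
  rw [Finset.mem_filter] at he
  obtain ⟨y, rfl⟩ := he.2
  refine ⟨y, ?_, hlt⟩
  simpa using he.1

/-- The indicator of the vertex `u`. -/
def bmInd (u i : V) : ℕ := if i = u then 1 else 0

lemma bmInd_self (u : V) : bmInd u u = 1 := by simp [bmInd]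

lemma bmInd_ne {u i : V} (h : i ≠ u) : bmInd u i = 0 := by simp [bmInd, h]

lemma bmUtil_add_edge (G : SimpleGraph V) [DecidableRel G.Adj] (f : Sym2 V → ℕ) (u v : V)
    (he : G.Adj u v) (i : V) :
    bmUtil G (f + bmOne s(u, v)) i = bmUtil G f i + bmInd u i + bmInd v i := by
  rw [bmUtil_add_one G f _ (by simpa using he)]
  have := he.ne
  unfold bmInd
  simp only [Sym2.mem_iff]
  split_ifs <;> simp_all

lemma bmSize_add_edge (G : SimpleGraph V) [DecidableRel G.Adj] (f : Sym2 V → ℕ) (u v : V)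
    (he : G.Adj u v) :
    bmSize G (f + bmOne s(u, v)) = bmSize G f + 1 :=
  bmSize_add_one G f _ (by simpa using he)

lemma bmUtil_add (G : SimpleGraph V) [DecidableRel G.Adj] (f g : Sym2 V → ℕ) (i : V) :
    bmUtil G (f + g) i = bmUtil G f i + bmUtil G g i := by
  unfold bmUtil
  simp [Finset.sum_add_distrib]

lemma bm_exchange (G : SimpleGraph V) [DecidableRel G.Adj] (b : V → ℕ) (k : ℕ)
    (hmax : ∀ g, BMFeasible G b g → bmSize G g ≤ k) (f g : Sym2 V → ℕ) (u v w : V)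
    (hf : ∀ i, bmUtil G f i ≤ b i) (hg : ∀ i, bmUtil G g i + bmInd w i ≤ b i) (n : ℕ) :
    ∀ (F K : Sym2 V → ℕ) (z : V), F + K = f + g → bmSize G F = k → bmSize G K = k →
      (∀ i, bmUtil G F i + bmInd u i + bmInd v i + bmInd w i ≤ b i + bmInd z i) →
      (∀ i, bmUtil G K i + bmInd z i ≤ b i) →
      (∑ e ∈ G.edgeFinset, (F e - g e) < n) →
      ∃ h, bmSize G h = k ∧ ((∀ i, bmUtil G h i + bmInd u i + bmInd w i ≤ b i) ∨
        (∀ i, bmUtil G h i + bmInd v i + bmInd w i ≤ b i)) := by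
  induction n with
  | zero =>
    intro F K z hFK hF hK hFb hKb hn
    omega
  | succ n ih =>
    intro F K z hFK hF hK hFb hKb hn
    by_cases h1 : ∀ i, bmUtil G F i + bmInd u i + bmInd w i ≤ b i
    · exact ⟨F, hF, Or.inl h1⟩
    by_cases h2 : ∀ i, bmUtil G F i + bmInd v i + bmInd w i ≤ b i
    · exact ⟨F, hF, Or.inr h2⟩
    have hlt : bmUtil G g z < bmUtil G F z := by
      push Not at h1 h2
      obtain ⟨i, hi⟩ := h1
      obtain ⟨j, hj⟩ := h2
      have hiz : i = z := by
        by_contra hne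
        have := hFb i
        rw [bmInd_ne hne] at this
        omega
      have hjz : j = z := by
        by_contra hne
        have := hFb j
        rw [bmInd_ne hne] at this
        omega
      subst hiz
      subst hjz
      have h3 := hFb j
      have h4 := hg j
      rw [bmInd_self] at h3
      omega
    obtain ⟨y, hzy, hylt⟩ := bm_exists_edge G g F z hlt
    have hKy : b y ≤ bmUtil G K y := by
      by_contra hcon
      push Not at hcon
      have hfe : BMFeasible G b (K + bmOne s(z, y)) := by
        intro i
        rw [bmUtil_add_edge G K z y hzy]
        by_cases hiy : i = y
        · subst hiy
          rw [bmInd_ne hzy.ne', bmInd_self]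
          omega
        · rw [bmInd_ne hiy]
          exact hKb i
      have := hmax _ hfe
      rw [bmSize_add_edge G K z y hzy] at this
      omega
    have hsum : bmUtil G F y + bmUtil G K y = bmUtil G f y + bmUtil G g y := by
      rw [← bmUtil_add, ← bmUtil_add, hFK]
    have hFy : bmUtil G F y ≤ bmUtil G g y := by
      have := hf y
      omega
    obtain ⟨H, rfl⟩ := bm_split F s(z, y) (by omega)
    have hHy : bmUtil G H y < bmUtil G g y := by
      rw [bmUtil_add_edge G H z y hzy, bmInd_self] at hFy
      omega
    obtain ⟨z', hyz', hz'lt⟩ := bm_exists_edge G H g y hHy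
    have hne : s(y, z') ≠ s(z, y) := by
      intro heq
      rw [heq] at hz'lt
      simp only [Pi.add_apply, bmOne, if_true] at hylt
      omega
    have hKz' : 0 < K s(y, z') := by
      have := congrFun hFK s(y, z')
      simp only [Pi.add_apply, bmOne, if_neg hne] at this
      omega
    obtain ⟨L, rfl⟩ := bm_split K s(y, z') hKz'
    refine ih (H + bmOne s(y, z')) (L + bmOne s(z, y)) z' ?_ ?_ ?_ ?_ ?_ ?_
    · rw [← hFK]; ac_rfl
    · rw [bmSize_add_edge G _ _ _ hyz']
      rw [bmSize_add_edge G _ _ _ hzy] at hF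
      exact hF
    · rw [bmSize_add_edge G _ _ _ hzy]
      rw [bmSize_add_edge G _ _ _ hyz'] at hK
      exact hK
    · intro i
      have := hFb i
      rw [bmUtil_add_edge G _ _ _ hzy] at this
      rw [bmUtil_add_edge G _ _ _ hyz']
      omega
    · intro i
      have := hKb i
      rw [bmUtil_add_edge G _ _ _ hyz'] at this
      rw [bmUtil_add_edge G _ _ _ hzy]
      omega
    · refine lt_of_lt_of_le (Finset.sum_lt_sum (g := fun e => (H + bmOne s(z, y)) e - g e) ?_ ?_)
        (Nat.lt_succ_iff.mp hn)
      · intro e _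
        simp only [Pi.add_apply, bmOne]
        by_cases he : e = s(y, z')
        · subst he
          rw [if_pos rfl]
          omega
        · rw [if_neg he]
          omega
      · refine ⟨s(z, y), by simpa using hzy, ?_⟩
        simp only [Pi.add_apply, bmOne, if_true] at hylt ⊢
        rw [if_neg hne.symm]
        omega

/-- Some maximum b-matching leaves one unit free at `u` and one more unit free at `v`. -/
def BMMiss (G : SimpleGraph V) [DecidableRel G.Adj] (b : V → ℕ) (u v : V) : Prop :=
  ∃ f, IsMaxBM G b f ∧ ∀ i, bmUtil G f i + bmInd u i + bmInd v i ≤ b i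

lemma BMMiss.symm {G : SimpleGraph V} [DecidableRel G.Adj] {b : V → ℕ} {u v : V}
    (h : BMMiss G b u v) : BMMiss G b v u := by
  obtain ⟨f, hf, h⟩ := h
  exact ⟨f, hf, fun i => by have := h i; omega⟩

lemma bmMiss_adj (G : SimpleGraph V) [DecidableRel G.Adj] (b : V → ℕ) (u v : V)
    (huv : G.Adj u v) : ¬ BMMiss G b u v := by
  rintro ⟨f, hf, h⟩
  have := hf.2 (f + bmOne s(u, v)) (fun i => by
    rw [bmUtil_add_edge G _ _ _ huv]; exact h i)
  rw [bmSize_add_edge G _ _ _ huv] at this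
  omega

lemma bmMiss_trans (G : SimpleGraph V) [DecidableRel G.Adj] (b : V → ℕ) (u v w : V)
    (hw : w ∈ VU G b) (h : BMMiss G b u v) : BMMiss G b u w ∨ BMMiss G b v w := by
  obtain ⟨f, hf, h⟩ := h
  obtain ⟨g, hg, hgw⟩ := hw
  have hgw' : ∀ i, bmUtil G g i + bmInd w i ≤ b i := by
    intro i
    by_cases hi : i = w
    · subst hi; rw [bmInd_self]; exact hgw
    · rw [bmInd_ne hi]; exact hg.1 i
  obtain ⟨k, hk, hor⟩ := bm_exchange G b (bmSize G f) hf.2 f g u v w hf.1 hgw' _ f g w rfl rfl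
    (le_antisymm (hf.2 _ hg.1) (hg.2 _ hf.1)) (fun i => by have := h i; omega) hgw'
    (Nat.lt_succ_self _)
  have key : (∀ i, bmUtil G k i ≤ b i) → IsMaxBM G b k := fun hkf =>
    ⟨hkf, fun g' hg' => hk ▸ hf.2 g' hg'⟩
  rcases hor with h' | h'
  · exact Or.inl ⟨k, key fun i => by have := h' i; omega, h'⟩
  · exact Or.inr ⟨k, key fun i => by have := h' i; omega, h'⟩

lemma bmMiss_transGen (G : SimpleGraph V) [DecidableRel G.Adj] (b : V → ℕ) (D : Set V)
    (hD : ∀ w ∈ D, w ∈ VU G b) (u v : D)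
    (h : Relation.TransGen (SimpleGraph.induce D G).Adj u v) : ¬ BMMiss G b u v := by
  induction h with
  | single h => exact bmMiss_adj G b _ _ h
  | @tail w v _ h ih =>
    intro hm
    rcases bmMiss_trans G b _ _ w (hD _ w.2) hm with h' | h'
    · exact ih h'
    · exact bmMiss_adj G b _ _ h h'.symm

/-- The capacities with one unit removed at `a`. -/
def bmDec (b : V → ℕ) (a : V) : V → ℕ := fun i => b i - bmInd a i

lemma bm_dec_max (G : SimpleGraph V) [DecidableRel G.Adj] (b : V → ℕ) (a y : V)
    (ha : a ∉ VU G b) (hay : G.Adj a y) (h : Sym2 V → ℕ)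
    (hmax : IsMaxBM G b (h + bmOne s(a, y))) : IsMaxBM G (bmDec b a) h := by
  refine ⟨fun i => ?_, fun g hg => ?_⟩
  · have := hmax.1 i
    rw [bmUtil_add_edge G _ _ _ hay] at this
    unfold bmDec
    omega
  · have hgf : BMFeasible G b g := fun i => (hg i).trans (by unfold bmDec; omega)
    have h1 := hmax.2 g hgf
    rw [bmSize_add_edge G _ _ _ hay] at h1
    by_contra hcon
    apply ha
    refine ⟨g, ⟨hgf, fun g' hg' => ?_⟩, ?_⟩
    · have := hmax.2 g' hg'
      rw [bmSize_add_edge G _ _ _ hay] at this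
      omega
    · have h2 := hg a
      have h3 := hmax.1 a
      rw [bmUtil_add_edge G _ _ _ hay, bmInd_self] at h3
      unfold bmDec at h2
      rw [bmInd_self] at h2
      omega

lemma bm_VU_dec (G : SimpleGraph V) [DecidableRel G.Adj] (b : V → ℕ) (a : V)
    (ha : a ∉ VU G b) (hba : 0 < b a) (w : V) (hw : w ∈ VU G b) : w ∈ VU G (bmDec b a) := by
  have hwa : w ≠ a := fun h => ha (h ▸ hw)
  obtain ⟨g, hg, hgw⟩ := hw
  have hga : bmUtil G g a = b a := by
    by_contra hne
    exact ha ⟨g, hg, lt_of_le_of_ne (hg.1 a) hne⟩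
  obtain ⟨y, hay, hy⟩ := bm_exists_edge G (fun _ => 0) g a (by
    rw [hga]; simpa [bmUtil] using hba)
  obtain ⟨h, rfl⟩ := bm_split g s(a, y) hy
  refine ⟨h, bm_dec_max G b a y ha hay h hg, ?_⟩
  rw [bmUtil_add_edge G _ _ _ hay] at hgw
  unfold bmDec
  rw [bmInd_ne hwa]
  omega

lemma bm_sum_util (G : SimpleGraph V) [DecidableRel G.Adj] (f : Sym2 V → ℕ) :
    ∑ i, bmUtil G f i = 2 * bmSize G f := by
  unfold bmUtil bmSize
  simp only [Finset.sum_filter]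
  rw [Finset.sum_comm, Finset.mul_sum]
  refine Finset.sum_congr rfl fun e he => ?_
  induction e using Sym2.ind with
  | _ x y =>
    have hxy : G.Adj x y := by simpa using he
    rw [← Finset.sum_filter]
    have : (Finset.univ.filter fun i => i ∈ s(x, y)) = {x, y} := by
      ext i; simp
    rw [this, Finset.sum_pair hxy.ne]
    ring

/-- if `J` is the vertex set of a connected component of the subgraph of `G`
induced on the underdemanded set `V^U`, and `|J| ≥ 2`, then `∑_{j ∈ J} b j` is odd and for
every `i ∈ J` there is a feasible b-matching supported on edges inside `J` saturating every
vertex of `J` except `i`, which gets `b i - 1`. -/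
theorem stmt_5 (G : SimpleGraph V) [DecidableRel G.Adj] (b : V → ℕ)
    (J : Finset V)
    (hJ : ∃ c : (SimpleGraph.induce (VU G b) G).ConnectedComponent,
        (J : Set V) = Subtype.val '' c.supp)
    (hJ2 : 2 ≤ J.card) :
    Odd (∑ j ∈ J, b j) ∧
    ∀ i ∈ J, ∃ f : Sym2 V → ℕ,
      BMFeasible G b f ∧
      (∀ e ∈ G.edgeFinset, f e ≠ 0 → ∀ v ∈ e, v ∈ J) ∧
      (∀ j ∈ J, j ≠ i → bmUtil G f j = b j) ∧
      bmUtil G f i + 1 = b i := by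
  obtain ⟨c, hc⟩ := hJ
  have hmem : ∀ v, v ∈ J ↔ ∃ h : v ∈ VU G b,
      (SimpleGraph.induce (VU G b) G).connectedComponentMk ⟨v, h⟩ = c := by
    intro v
    rw [← Finset.mem_coe, hc]
    constructor
    · rintro ⟨⟨x, hx⟩, hxc, rfl⟩
      exact ⟨hx, hxc⟩
    · rintro ⟨hx, hxc⟩
      exact ⟨⟨v, hx⟩, hxc, rfl⟩
  have hreach : ∀ (u v : V) (hu : u ∈ J) (hv : v ∈ J), u ≠ v →
      Relation.TransGen (SimpleGraph.induce (VU G b) G).Adj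
        ⟨u, ((hmem u).1 hu).1⟩ ⟨v, ((hmem v).1 hv).1⟩ := by
    intro u v hu hv huv
    obtain ⟨hu1, hu2⟩ := (hmem u).1 hu
    obtain ⟨hv1, hv2⟩ := (hmem v).1 hv
    have hr := SimpleGraph.ConnectedComponent.exact (hu2.trans hv2.symm)
    rw [SimpleGraph.reachable_iff_reflTransGen] at hr
    rcases Relation.reflTransGen_iff_eq_or_transGen.1 hr with h | h
    · exact absurd (congrArg Subtype.val h).symm huv
    · exact h
  have hreach' : ∀ (u v : V) (hu : u ∈ J) (hv : v ∈ J),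
      Relation.TransGen (SimpleGraph.induce (VU G b) G).Adj
        ⟨u, ((hmem u).1 hu).1⟩ ⟨v, ((hmem v).1 hv).1⟩ := by
    intro u v hu hv
    by_cases huv : u = v
    · subst huv
      obtain ⟨t, ht, htu⟩ := Finset.exists_mem_ne (by omega : 1 < J.card) u
      exact (hreach u t hu ht htu.symm).trans (hreach t u ht hu htu)
    · exact hreach u v hu hv huv
  have hmiss : ∀ b' : V → ℕ, (∀ w ∈ VU G b, w ∈ VU G b') → ∀ u ∈ J, ∀ v ∈ J,
      ¬ BMMiss G b' u v := fun b' hb' u hu v hv =>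
    bmMiss_transGen G b' _ hb' _ _ (hreach' u v hu hv)
  have hmain : ∀ i ∈ J, ∃ f : Sym2 V → ℕ,
      BMFeasible G b f ∧
      (∀ e ∈ G.edgeFinset, f e ≠ 0 → ∀ v ∈ e, v ∈ J) ∧
      (∀ j ∈ J, j ≠ i → bmUtil G f j = b j) ∧
      bmUtil G f i + 1 = b i := by
    intro i hi
    obtain ⟨f, hf, hfi⟩ := ((hmem i).1 hi).1
    have hfi' : ∀ t, bmUtil G f t + bmInd i t ≤ b t := by
      intro t
      by_cases ht : t = i
      · subst ht; rw [bmInd_self]; exact hfi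
      · rw [bmInd_ne ht]; exact hf.1 t
    have hsat : ∀ j ∈ J, b j ≤ bmUtil G f j + bmInd i j := by
      intro j hj
      by_contra hcon
      refine hmiss b (fun _ h => h) i hi j hj ⟨f, hf, fun t => ?_⟩
      by_cases ht : t = j
      · subst ht; rw [bmInd_self]; omega
      · rw [bmInd_ne ht]; exact hfi' t
    have hleave : ∀ j ∈ J, ∀ a, G.Adj j a → f s(j, a) ≠ 0 → a ∈ J := by
      intro j hj a hja hne
      by_contra haJ
      have haU : a ∉ VU G b := by
        intro haU
        apply haJ
        obtain ⟨hj1, hj2⟩ := (hmem j).1 hj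
        refine (hmem a).2 ⟨haU, ?_⟩
        rw [← hj2]
        refine SimpleGraph.ConnectedComponent.sound (SimpleGraph.Adj.reachable ?_)
        exact hja.symm
      rw [Sym2.eq_swap] at hne
      obtain ⟨h, rfl⟩ := bm_split f s(a, j) (by omega)
      have hba : 0 < b a := by
        have := hf.1 a
        rw [bmUtil_add_edge G _ _ _ hja.symm, bmInd_self] at this
        omega
      refine hmiss (bmDec b a) (bm_VU_dec G b a haU hba) i hi j hj
        ⟨h, bm_dec_max G b a j haU hja.symm h hf, fun t => ?_⟩
      have := hfi' t
      rw [bmUtil_add_edge G _ _ _ hja.symm] at this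
      unfold bmDec
      omega
    have hutil : ∀ j ∈ J,
        bmUtil G (fun e => if ∀ v ∈ e, v ∈ J then f e else 0) j = bmUtil G f j := by
      intro j hj
      unfold bmUtil
      refine Finset.sum_congr rfl fun e he => ?_
      rw [Finset.mem_filter] at he
      obtain ⟨he, hje⟩ := he
      obtain ⟨y, rfl⟩ := hje
      have hjy : G.Adj j y := by simpa using he
      change (if ∀ v ∈ s(j, y), v ∈ J then f s(j, y) else 0) = f s(j, y)
      split_ifs with hall
      · rfl
      · by_contra hne
        apply hall
        have hy := hleave j hj y hjy (fun h => hne h.symm)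
        intro v hv
        rcases Sym2.mem_iff.1 hv with rfl | rfl
        · exact hj
        · exact hy
    refine ⟨fun e => if ∀ v ∈ e, v ∈ J then f e else 0, fun t => ?_, ?_, ?_, ?_⟩
    · refine le_trans (Finset.sum_le_sum fun e _ => ?_) (hf.1 t)
      split_ifs <;> omega
    · intro e _ hne
      by_contra hcon
      exact hne (if_neg hcon)
    · intro j hj hji
      rw [hutil j hj]
      have := hsat j hj
      rw [bmInd_ne hji] at this
      exact le_antisymm (hf.1 j) this
    · rw [hutil i hi]
      have := hsat i hi
      rw [bmInd_self] at this
      omega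
  refine ⟨?_, hmain⟩
  obtain ⟨i, hi⟩ : J.Nonempty := Finset.card_pos.1 (by omega)
  obtain ⟨f, -, hsupp, hj, hfi⟩ := hmain i hi
  refine ⟨bmSize G f, ?_⟩
  have h1 : ∑ t, bmUtil G f t = ∑ t ∈ J, bmUtil G f t := by
    symm
    refine Finset.sum_subset (Finset.subset_univ J) fun t _ ht => ?_
    refine Finset.sum_eq_zero fun e he => ?_
    rw [Finset.mem_filter] at he
    by_contra hne
    exact ht (hsupp e he.1 hne t he.2)
  have h2 : ∑ t ∈ J.erase i, b t = ∑ t ∈ J.erase i, bmUtil G f t :=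
    Finset.sum_congr rfl (fun t ht => (hj t (Finset.mem_of_mem_erase ht)
      (Finset.ne_of_mem_erase ht)).symm)
  have h3 := Finset.add_sum_erase J b hi
  have h4 := Finset.add_sum_erase J (bmUtil G f) hi
  have h5 := bm_sum_util G f
  omega
end

section
/- If the graph G is bipartite, then no two vertices of V^U are adjacent in G; that is, the set of vertices left unsaturated by some maximum b-matching forms an independent set. -/
variable {V : Type*} [Fintype V] [DecidableEq V]

/-- Integer-valued utility. -/
def zUtil (G : SimpleGraph V) [DecidableRel G.Adj] (i : V) (f : Sym2 V → ℤ) : ℤ :=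
  ∑ e ∈ G.edgeFinset.filter (fun e => i ∈ e), f e

/-- Integer-valued size. -/
def zSize (G : SimpleGraph V) [DecidableRel G.Adj] (f : Sym2 V → ℤ) : ℤ :=
  ∑ e ∈ G.edgeFinset, f e

lemma zUtil_add (G : SimpleGraph V) [DecidableRel G.Adj] (i : V) (f g : Sym2 V → ℤ) :
    zUtil G i (f + g) = zUtil G i f + zUtil G i g := by
  simp [zUtil, Finset.sum_add_distrib]

lemma zUtil_sub (G : SimpleGraph V) [DecidableRel G.Adj] (i : V) (f g : Sym2 V → ℤ) :
    zUtil G i (f - g) = zUtil G i f - zUtil G i g := by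
  simp [zUtil, Finset.sum_sub_distrib]

lemma zSize_add (G : SimpleGraph V) [DecidableRel G.Adj] (f g : Sym2 V → ℤ) :
    zSize G (f + g) = zSize G f + zSize G g := by
  simp [zSize, Finset.sum_add_distrib]

lemma zSize_sub (G : SimpleGraph V) [DecidableRel G.Adj] (f g : Sym2 V → ℤ) :
    zSize G (f - g) = zSize G f - zSize G g := by
  simp [zSize, Finset.sum_sub_distrib]

/-- Indicator of an edge. -/
def ind (u v : V) : Sym2 V → ℤ := fun e => if e = s(u, v) then 1 else 0

lemma zSize_ind (G : SimpleGraph V) [DecidableRel G.Adj] (u v : V) (h : G.Adj u v) :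
    zSize G (ind u v) = 1 := by
  simp [zSize, ind, h]

lemma zUtil_ind (G : SimpleGraph V) [DecidableRel G.Adj] (i u v : V) (h : G.Adj u v) :
    zUtil G i (ind u v) = if i = u ∨ i = v then 1 else 0 := by
  simp [zUtil, ind, h]

lemma exists_edge_pos (G : SimpleGraph V) [DecidableRel G.Adj] (i : V) (f : Sym2 V → ℤ)
    (h : 0 < zUtil G i f) : ∃ v, G.Adj i v ∧ 0 < f s(i, v) := by
  by_contra! hc
  refine absurd h (not_lt.2 (Finset.sum_nonpos fun e he => ?_))
  simp only [Finset.mem_filter, SimpleGraph.mem_edgeFinset] at he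
  obtain ⟨he, w, rfl⟩ := he
  exact hc w he

lemma core (G : SimpleGraph V) [DecidableRel G.Adj] (b : V → ℤ) (A : V → Prop)
    (hA : ∀ u v, G.Adj u v → (A u ↔ ¬ A v)) (f g : Sym2 V → ℤ) (M : ℤ)
    (hmax : ∀ h : Sym2 V → ℤ, (∀ e, 0 ≤ h e) → (∀ i, zUtil G i h ≤ b i) → zSize G h ≤ M)
    (hf0 : ∀ e, 0 ≤ f e) (hg0 : ∀ e, 0 ≤ g e) (hf : ∀ i, zUtil G i f ≤ b i)
    (hgB : ∀ w, ¬ A w → zUtil G w g ≤ b w) (hS : zSize G f + zSize G g = 2 * M + 1) :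
    ∀ (n : ℕ) (p : Sym2 V → ℤ) (u : V), ∑ e, |g e - p e| < n → A u →
      (∀ e, (f e ≤ p e ∧ p e ≤ g e) ∨ (g e ≤ p e ∧ p e ≤ f e)) →
      zSize G p = M → (∀ i, zUtil G i p ≤ b i) → zUtil G u p < b u →
      (∀ a, zUtil G a f + zUtil G a g - zUtil G a p ≤ b a + if a = u then 1 else 0) → False := by
  intro n
  induction n with
  | zero =>
    intro p u hn
    have : 0 ≤ ∑ e, |g e - p e| := Finset.sum_nonneg fun _ _ => abs_nonneg _
    push_cast at hn
    omega
  | succ n ih =>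
    intro p u hn hu hbt hpS hpF hpu hh
    -- the complementary matching is infeasible at `u`
    have h1 : b u < zUtil G u f + zUtil G u g - zUtil G u p := by
      by_contra hc
      have := hmax (f + g - p) (fun e => by
          have := hbt e; have := hf0 e; have := hg0 e
          simp only [Pi.add_apply, Pi.sub_apply]; omega)
        (fun i => by
          rw [zUtil_sub, zUtil_add]
          have := hh i
          split_ifs at this with hi
          · subst hi; omega
          · omega)
      rw [zSize_sub, zSize_add] at this
      omega
    obtain ⟨w, huw, hw⟩ := exists_edge_pos G u (g - p) (by
      rw [zUtil_sub]; have := hf u; omega)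
    simp only [Pi.sub_apply] at hw
    have hwA : ¬ A w := (hA u w huw).1 hu
    have hwu : w ≠ u := huw.ne'
    have hsat : b w ≤ zUtil G w p := by
      by_contra hc
      have := hmax (p + ind u w) (fun e => by
          have := hbt e; have := hf0 e; have := hg0 e
          simp only [Pi.add_apply, ind]; split_ifs <;> omega)
        (fun i => by
          rw [zUtil_add, zUtil_ind G i u w huw]
          have := hpF i
          split_ifs with hi
          · rcases hi with rfl | rfl <;> omega
          · omega)
      rw [zSize_add, zSize_ind G u w huw] at this
      omega
    obtain ⟨v, hwv, hv⟩ := exists_edge_pos G w (p + ind u w - g) (by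
      rw [zUtil_sub, zUtil_add, zUtil_ind G w u w huw]
      have := hgB w hwA
      simp only [or_true, if_true]
      omega)
    have hne : s(w, v) ≠ s(u, w) := by
      intro he
      rw [he] at hv
      simp only [Pi.add_apply, Pi.sub_apply, ind, if_true] at hv
      omega
    have hvu : v ≠ u := by
      rintro rfl
      exact hne Sym2.eq_swap
    have hvA : A v := by
      have := hA w v hwv
      tauto
    have hvw : v ≠ w := hwv.ne'
    simp only [Pi.add_apply, Pi.sub_apply, ind, if_neg hne] at hv
    have hU : ∀ a, zUtil G a (p + ind u w - ind w v) =
        zUtil G a p + (if a = u then 1 else 0) - (if a = v then 1 else 0) := by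
      intro a
      rw [zUtil_sub, zUtil_add, zUtil_ind G a u w huw, zUtil_ind G a w v hwv]
      by_cases h1 : a = u <;> by_cases h2 : a = v <;> by_cases h3 : a = w <;> simp_all
    have hle : ∀ e, |g e - (p + ind u w - ind w v) e| ≤ |g e - p e| := by
      intro e
      simp only [Pi.add_apply, Pi.sub_apply, ind]
      split_ifs with h1 h2 h2
      · exact absurd (h2.symm.trans h1) hne
      · subst h1; rw [abs_of_pos hw, abs_of_nonneg] <;> omega
      · subst h2; rw [abs_of_neg (a := g s(w, v) - p s(w, v)), abs_of_nonpos] <;> omega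
      · simp
    have hlt : |g s(u, w) - (p + ind u w - ind w v) s(u, w)| < |g s(u, w) - p s(u, w)| := by
      simp only [Pi.add_apply, Pi.sub_apply, ind, if_true, if_neg hne.symm]
      rw [abs_of_pos hw, abs_of_nonneg] <;> omega
    refine ih (p + ind u w - ind w v) v ?_ hvA ?_ ?_ ?_ ?_ ?_
    · have := Finset.sum_lt_sum (s := Finset.univ) (fun e _ => hle e) ⟨s(u, w), Finset.mem_univ _, hlt⟩
      push_cast at hn
      omega
    · intro e
      have := hbt e
      simp only [Pi.add_apply, Pi.sub_apply, ind]
      split_ifs with h1 h2 h2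
      · exact absurd (h2.symm.trans h1) hne
      · subst h1; omega
      · subst h2; omega
      · omega
    · rw [zSize_sub, zSize_add, zSize_ind G u w huw, zSize_ind G w v hwv]; omega
    · intro a
      rw [hU]
      have := hpF a
      split_ifs with h1 h2 h2 <;> try omega
      · subst h1; omega
    · rw [hU, if_neg hvu, if_pos rfl]
      have := hpF v
      omega
    · intro a
      rw [hU]
      have := hh a
      split_ifs at this ⊢ <;> omega

/-- if `G` is bipartite then the underdemanded set `V^U` is independent. -/
theorem stmt_7 (G : SimpleGraph V) [DecidableRel G.Adj] (b : V → ℕ)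
    (hbip : G.Colorable 2) :
    ∀ i ∈ VU G b, ∀ j ∈ VU G b, ¬ G.Adj i j := by
  rintro i ⟨f, ⟨hfF, hfM⟩, hfi⟩ j ⟨g, ⟨hgF, hgM⟩, hgj⟩ hij
  obtain ⟨c⟩ := hbip
  have hsz : bmSize G f = bmSize G g := le_antisymm (hgM f hfF) (hfM g hgF)
  have cU : ∀ (k : Sym2 V → ℕ) a, zUtil G a (fun e => (k e : ℤ)) = (bmUtil G k a : ℤ) := by
    intro k a; simp [zUtil, bmUtil]
  have cS : ∀ (k : Sym2 V → ℕ), zSize G (fun e => (k e : ℤ)) = (bmSize G k : ℤ) := by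
    intro k; simp [zSize, bmSize]
  have hA : ∀ u v, G.Adj u v → (c u = c i ↔ ¬ c v = c i) := by
    intro u v h
    have := c.valid h
    omega
  have hF : ∀ a, zUtil G a (fun e => (f e : ℤ)) ≤ (b a : ℤ) := by
    intro a; rw [cU]; exact_mod_cast hfF a
  have hgU : ∀ a, zUtil G a ((fun e => (g e : ℤ)) + ind i j) ≤ (b a : ℤ) + if a = i then 1 else 0 := by
    intro a
    rw [zUtil_add, zUtil_ind G a i j hij, cU]
    have := hgF a
    by_cases h1 : a = i
    · simp [h1]; subst h1; exact_mod_cast this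
    · by_cases h2 : a = j
      · subst h2; simp [h1]; omega
      · simp [h1, h2]; exact this
  refine core G (fun a => (b a : ℤ)) (fun v => c v = c i) hA (fun e => (f e : ℤ))
    ((fun e => (g e : ℤ)) + ind i j) (bmSize G f) ?_ (fun e => by positivity) ?_ hF ?_ ?_
    ((∑ e, |((fun e => (g e : ℤ)) + ind i j) e - (f e : ℤ)|).toNat + 1)
    (fun e => (f e : ℤ)) i ?_ rfl ?_ (cS f) hF ?_ ?_
  · intro h h0 hh
    have he : h = fun e => ((h e).toNat : ℤ) := by
      funext e; have := h0 e; omega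
    rw [he, cS]
    have := hfM (fun e => (h e).toNat) (fun a => by
      have := hh a
      rw [he, cU] at this
      exact_mod_cast this)
    exact_mod_cast this
  · intro e
    simp only [Pi.add_apply, ind]
    split_ifs <;> omega
  · intro w hw
    have := hgU w
    have hwi : w ≠ i := by rintro rfl; exact hw rfl
    simpa [hwi] using this
  · rw [zSize_add, zSize_ind G i j hij, cS, cS]; omega
  · push_cast
    omega
  · intro e
    omega
  · rw [cU]; exact_mod_cast hfi
  · intro a
    have := hgU a
    omega
end

section
/- Let m be the maximum value of a feasible transportation flow. Then every feasible transportation flow of value m lies in the convex hull (in ℝ^{S×D}) of the set of integer-valued feasible transportation flows of value m. In particular, every fractional maximum flow is a convex combination of integral maximum flows. -/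
/-- A feasible transportation flow for admissible pairs `E`, supplies `s` and demands `d`. -/
def TFeasible {S D : Type*} [Fintype S] [Fintype D] (E : Set (S × D))
    (s : S → ℕ) (d : D → ℕ) (g : S × D → ℝ) : Prop :=
  (∀ p, 0 ≤ g p) ∧ (∀ p, p ∉ E → g p = 0) ∧
  (∀ i, ∑ j, g (i, j) ≤ (s i : ℝ)) ∧ (∀ j, ∑ i, g (i, j) ≤ (d j : ℝ))

/-- The value of a transportation flow. -/
def TValue {S D : Type*} [Fintype S] [Fintype D] (g : S × D → ℝ) : ℝ :=
  ∑ p, g p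

open scoped Classical in
lemma aux_other {C : Type*} [Fintype C] (f : C → ℝ) (Z : AddSubgroup ℝ)
    (hs : ∑ j, f j ∈ Z) (j : C) (hj : f j ∉ Z) : ∃ k, k ≠ j ∧ f k ∉ Z := by
  by_contra hcon
  push Not at hcon
  apply hj
  have h1 : ∑ k ∈ Finset.univ.erase j, f k ∈ Z :=
    sum_mem (fun k hk => hcon k (Finset.ne_of_mem_erase hk))
  have h2 := Finset.add_sum_erase Finset.univ f (Finset.mem_univ j)
  have h3 := Z.sub_mem hs h1
  rwa [← h2, add_sub_cancel_right] at h3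

open scoped Classical in
lemma aux_dir {R C : Type*} [Fintype R] [Fintype C] (g : R × C → ℝ) (Z : AddSubgroup ℝ)
    (hr : ∀ i, ∑ j, g (i, j) ∈ Z) (hc : ∀ j, ∑ i, g (i, j) ∈ Z)
    (p₀ : R × C) (hp₀ : g p₀ ∉ Z) :
    ∃ h : R × C → ℝ, h ≠ 0 ∧ (∀ p, g p ∈ Z → h p = 0) ∧
      (∀ i, ∑ j, h (i, j) = 0) ∧ (∀ j, ∑ i, h (i, j) = 0) := by
  let F := {p : R × C // g p ∉ Z}
  let R' := {i : R // ∃ j, g (i, j) ∉ Z}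
  let C' := {j : C // ∃ i, g (i, j) ∉ Z}
  have cardR : Fintype.card R' * 2 ≤ Fintype.card F := by
    have hex : ∀ i : R', ∃ j k, k ≠ j ∧ g (i.1, j) ∉ Z ∧ g (i.1, k) ∉ Z := by
      rintro ⟨i, j, hj⟩
      obtain ⟨k, hk, hk'⟩ := aux_other (fun j => g (i, j)) Z (hr i) j hj
      exact ⟨j, k, hk, hj, hk'⟩
    choose a b hab ha hb using hex
    have hinj : Function.Injective (fun q : R' × Bool =>
        (if q.2 then ⟨(q.1.1, a q.1), ha q.1⟩ else ⟨(q.1.1, b q.1), hb q.1⟩ : F)) := by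
      rintro ⟨i, x⟩ ⟨i', x'⟩ h
      have hi : i = i' := by
        apply Subtype.ext
        have := congrArg (fun q : F => q.1.1) h
        cases x <;> cases x' <;> simpa using this
      subst hi
      have := congrArg (fun q : F => q.1.2) h
      have h1 := hab i
      cases x <;> cases x'
      · rfl
      · exact absurd (by simpa using this) h1
      · exact absurd (by simpa using this.symm) h1
      · rfl
    simpa using Fintype.card_le_of_injective _ hinj
  have cardC : Fintype.card C' * 2 ≤ Fintype.card F := by
    have hex : ∀ j : C', ∃ i k, k ≠ i ∧ g (i, j.1) ∉ Z ∧ g (k, j.1) ∉ Z := by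
      rintro ⟨i, j, hj⟩
      obtain ⟨k, hk, hk'⟩ := aux_other (fun j => g (j, i)) Z (hc i) j hj
      exact ⟨j, k, hk, hj, hk'⟩
    choose a b hab ha hb using hex
    have hinj : Function.Injective (fun q : C' × Bool =>
        (if q.2 then ⟨(a q.1, q.1.1), ha q.1⟩ else ⟨(b q.1, q.1.1), hb q.1⟩ : F)) := by
      rintro ⟨i, x⟩ ⟨i', x'⟩ h
      have hi : i = i' := by
        apply Subtype.ext
        have := congrArg (fun q : F => q.1.2) h
        cases x <;> cases x' <;> simpa using this
      subst hi
      have := congrArg (fun q : F => q.1.1) h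
      have h1 := hab i
      cases x <;> cases x'
      · rfl
      · exact absurd (by simpa using this) h1
      · exact absurd (by simpa using this.symm) h1
      · rfl
    simpa using Fintype.card_le_of_injective _ hinj
  let e : (F → ℝ) →ₗ[ℝ] (R × C → ℝ) := 
    { toFun := fun x p => if hp : g p ∉ Z then x ⟨p, hp⟩ else 0
      map_add' := by intro x y; ext p; by_cases hp : g p ∈ Z <;> simp [hp]
      map_smul' := by intro c x; ext p; by_cases hp : g p ∈ Z <;> simp [hp] }
  have e0 : ∀ x p, g p ∈ Z → e x p = 0 := by
    intro x p hp; simp [e, hp]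
  let L : (F → ℝ) →ₗ[ℝ] (R' → ℝ) × (C' → ℝ) :=
    { toFun := fun x => (fun i => ∑ j, e x (i.1, j), fun j => ∑ i, e x (i, j.1))
      map_add' := by intro x y; ext <;> simp [Finset.sum_add_distrib]
      map_smul' := by intro c x; ext <;> simp [Finset.mul_sum] }
  have rz : ∀ x i, (¬ ∃ j, g (i, j) ∉ Z) → ∑ j, e x (i, j) = 0 := by
    intro x i hi
    push Not at hi
    exact Finset.sum_eq_zero (fun j _ => e0 x _ (hi j))
  have cz : ∀ x j, (¬ ∃ i, g (i, j) ∉ Z) → ∑ i, e x (i, j) = 0 := by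
    intro x i hi
    push Not at hi
    exact Finset.sum_eq_zero (fun j _ => e0 x _ (hi j))
  have hφ : ∀ x, ∑ i, (L x).1 i = ∑ j, (L x).2 j := by
    intro x
    have h1 : ∑ i : R', (L x).1 i = ∑ i, ∑ j, e x (i, j) := by
      have := Fintype.sum_subtype_add_sum_subtype (fun i => ∃ j, g (i, j) ∉ Z)
        (fun i => ∑ j, e x (i, j))
      rw [← this, Finset.sum_eq_zero (s := (Finset.univ : Finset {i // ¬ ∃ j, g (i, j) ∉ Z}))
        (fun i _ => rz x i.1 i.2), add_zero]
      rfl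
    have h2 : ∑ j : C', (L x).2 j = ∑ j, ∑ i, e x (i, j) := by
      have := Fintype.sum_subtype_add_sum_subtype (fun j => ∃ i, g (i, j) ∉ Z)
        (fun j => ∑ i, e x (i, j))
      rw [← this, Finset.sum_eq_zero (s := (Finset.univ : Finset {j // ¬ ∃ i, g (i, j) ∉ Z}))
        (fun i _ => cz x i.1 i.2), add_zero]
      rfl
    rw [h1, h2, Finset.sum_comm]
  have hni : ¬ Function.Injective L := by
    intro hinj
    have hlt : LinearMap.range L < ⊤ := by
      rw [lt_top_iff_ne_top]
      intro htop
      have hmem : ((Pi.single (⟨p₀.1, p₀.2, hp₀⟩ : R') 1, 0) : (R' → ℝ) × (C' → ℝ)) ∈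
          LinearMap.range L := by rw [htop]; trivial
      obtain ⟨x, hx⟩ := hmem
      have := hφ x
      rw [hx] at this
      simp at this
    have h1 := Submodule.finrank_lt hlt.ne
    rw [LinearMap.finrank_range_of_inj hinj] at h1
    simp only [Module.finrank_prod, Module.finrank_fintype_fun_eq_card] at h1
    omega
  rw [← LinearMap.ker_eq_bot, ← Ne, Submodule.ne_bot_iff] at hni
  obtain ⟨x, hx, hx0⟩ := hni
  have hx' : L x = 0 := hx
  refine ⟨e x, ?_, e0 x, ?_, ?_⟩
  · intro h0
    apply hx0
    ext p
    have := congrFun h0 p.1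
    have hp := p.2
    simpa [e, hp] using this
  · intro i
    by_cases hi : ∃ j, g (i, j) ∉ Z
    · exact congrFun (congrArg Prod.fst hx') ⟨i, hi⟩
    · exact rz x i hi
  · intro i
    by_cases hi : ∃ j, g (j, i) ∉ Z
    · exact congrFun (congrArg Prod.snd hx') ⟨i, hi⟩
    · exact cz x i hi

/-- table with slack row and column -/
noncomputable def slackTable {S D : Type*} [Fintype S] [Fintype D]
    (s : S → ℕ) (d : D → ℕ) (g : S × D → ℝ) : Option S × Option D → ℝ
  | (some i, some j) => g (i, j)
  | (some i, none) => s i - ∑ j, g (i, j)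
  | (none, some j) => d j - ∑ i, g (i, j)
  | (none, none) => ∑ i, ∑ j, g (i, j)

lemma aux_ext {S D : Type*} [Fintype S] [Fintype D] (E : Set (S × D))
    (s : S → ℕ) (d : D → ℕ) (g : S × D → ℝ) (hg : TFeasible E s d g)
    (hne : ∃ p, ¬ ∃ n : ℤ, g p = n) :
    ∃ h : S × D → ℝ, h ≠ 0 ∧ TFeasible E s d (g + h) ∧ TFeasible E s d (g - h) := by
  obtain ⟨hg0, hgE, hgr, hgc⟩ := hg
  let Z : AddSubgroup ℝ := (Int.castAddHom ℝ).range
  have hZ : ∀ x, x ∈ Z ↔ ∃ n : ℤ, x = n := by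
    intro x; simp [Z, AddSubgroup.mem_zmultiples_iff, eq_comm]
  have hnat : ∀ n : ℕ, (n : ℝ) ∈ Z := fun n => (hZ _).2 ⟨n, by simp⟩
  obtain ⟨p₀, hp₀⟩ := hne
  have hr : ∀ i, ∑ j, slackTable s d g (i, j) ∈ Z := by
    rintro (_ | i)
    · have : ∑ j, slackTable s d g (none, j) = ∑ j, (d j : ℝ) := by
        simp only [Fintype.sum_option, slackTable, Finset.sum_sub_distrib]
        rw [Finset.sum_comm]; ring
      rw [this]; exact sum_mem fun j _ => hnat _
    · have : ∑ j, slackTable s d g (some i, j) = s i := by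
        simp only [Fintype.sum_option, slackTable]; ring
      rw [this]; exact hnat _
  have hc : ∀ j, ∑ i, slackTable s d g (i, j) ∈ Z := by
    rintro (_ | j)
    · have : ∑ j, slackTable s d g (j, none) = ∑ j, (s j : ℝ) := by
        simp only [Fintype.sum_option, slackTable, Finset.sum_sub_distrib]
        ring
      rw [this]; exact sum_mem fun j _ => hnat _
    · have : ∑ i, slackTable s d g (i, some j) = d j := by
        simp only [Fintype.sum_option, slackTable]; ring
      rw [this]; exact hnat _
  obtain ⟨h, hh0, hhZ, hhr, hhc⟩ := aux_dir (slackTable s d g) Z hr hc (some p₀.1, some p₀.2)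
    (by rw [hZ]; exact hp₀)
  have hnn : ∀ p, 0 ≤ slackTable s d g p := by
    rintro ⟨_ | i, _ | j⟩
    · exact Finset.sum_nonneg fun i _ => Finset.sum_nonneg fun j _ => hg0 _
    · exact sub_nonneg.2 (hgc j)
    · exact sub_nonneg.2 (hgr i)
    · exact hg0 _
  have hev : ∀ᶠ t : ℝ in nhds 0, ∀ p, 0 ≤ slackTable s d g p + t * h p ∧
      0 ≤ slackTable s d g p - t * h p := by
    rw [Filter.eventually_all]
    intro p
    by_cases hp : slackTable s d g p ∈ Z
    · simp [hhZ p hp, hnn p]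
    · have hpos : 0 < slackTable s d g p := 
        lt_of_le_of_ne (hnn p) (fun h => hp (by rw [← h]; exact Z.zero_mem))
      have c1 : ContinuousAt (fun t : ℝ => slackTable s d g p + t * h p) 0 := by fun_prop
      have c2 : ContinuousAt (fun t : ℝ => slackTable s d g p - t * h p) 0 := by fun_prop
      have e1 := c1.eventually_const_lt (u := 0) (by simpa using hpos)
      have e2 := c2.eventually_const_lt (u := 0) (by simpa using hpos)
      filter_upwards [e1, e2] with t h1 h2
      exact ⟨h1.le, h2.le⟩
  obtain ⟨t, ht, htpos⟩ := ((hev.filter_mono nhdsWithin_le_nhds).and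
    (self_mem_nhdsWithin (a := (0 : ℝ)) (s := Set.Ioi 0))).exists
  have htpos : 0 < t := htpos
  have r1 : ∀ i, h (some i, none) = - ∑ j, h (some i, some j) := by
    intro i; have := hhr (some i); rw [Fintype.sum_option] at this; linarith
  have c1 : ∀ j, h (none, some j) = - ∑ i, h (some i, some j) := by
    intro i; have := hhc (some i); rw [Fintype.sum_option] at this; linarith
  refine ⟨fun p => t * h (some p.1, some p.2), ?_, ⟨?_, ?_, ?_, ?_⟩, ⟨?_, ?_, ?_, ?_⟩⟩
  · intro h0
    have hz : ∀ i j, h (some i, some j) = 0 := by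
      intro i j
      have := congrFun h0 (i, j)
      simpa [htpos.ne'] using this
    have r2 : ∀ i, h (some i, none) = 0 := by simp [r1, hz]
    have c2 : ∀ i, h (none, some i) = 0 := by simp [c1, hz]
    apply hh0
    ext ⟨_ | i, _ | j⟩
    · have := hhr none
      rw [Fintype.sum_option] at this
      simpa [c2] using this
    · exact c2 j
    · exact r2 i
    · exact hz i j
  · intro p; exact (ht (some p.1, some p.2)).1
  · intro p hp
    have h1 := hgE p hp
    have : h (some p.1, some p.2) = 0 := hhZ _ (by simp [slackTable, h1, Z.zero_mem])
    simp [h1, this]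
  · intro i
    have := (ht (some i, none)).1
    simp only [slackTable, r1] at this
    simp only [Pi.add_apply, Finset.sum_add_distrib, ← Finset.mul_sum]
    linarith
  · intro i
    have := (ht (none, some i)).1
    simp only [slackTable, c1] at this
    simp only [Pi.add_apply, Finset.sum_add_distrib, ← Finset.mul_sum]
    linarith
  · intro p; exact (ht (some p.1, some p.2)).2
  · intro p hp
    have h1 := hgE p hp
    have : h (some p.1, some p.2) = 0 := hhZ _ (by simp [slackTable, h1, Z.zero_mem])
    simp [h1, this]
  · intro i
    have := (ht (some i, none)).2
    simp only [slackTable, r1] at this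
    simp only [Pi.sub_apply, Finset.sum_sub_distrib, ← Finset.mul_sum]
    linarith
  · intro i
    have := (ht (none, some i)).2
    simp only [slackTable, c1] at this
    simp only [Pi.sub_apply, Finset.sum_sub_distrib, ← Finset.mul_sum]
    linarith

lemma TFeasible.le_s {S D : Type*} [Fintype S] [Fintype D] {E : Set (S × D)}
    {s : S → ℕ} {d : D → ℕ} {g : S × D → ℝ} (hg : TFeasible E s d g) (p : S × D) :
    g p ≤ s p.1 :=
  (Finset.single_le_sum (f := fun j => g (p.1, j)) (fun j _ => hg.1 _)
    (Finset.mem_univ p.2)).trans (hg.2.2.1 p.1)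

/-- every feasible transportation flow of maximum value `m` lies in the convex hull
of the integer-valued feasible transportation flows of value `m`. -/
theorem stmt_8 {S D : Type*} [Fintype S] [Fintype D] (E : Set (S × D))
    (s : S → ℕ) (d : D → ℕ) (m : ℝ)
    (hm : IsGreatest {v : ℝ | ∃ g, TFeasible E s d g ∧ TValue g = v} m)
    (g : S × D → ℝ) (hg : TFeasible E s d g) (hgm : TValue g = m) :
    g ∈ convexHull ℝ
      {h : S × D → ℝ | TFeasible E s d h ∧ (∀ p, ∃ n : ℤ, h p = n) ∧ TValue h = m} := by
  let P : Set (S × D → ℝ) := {h | TFeasible E s d h ∧ TValue h = m}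
  set I : Set (S × D → ℝ) :=
    {h : S × D → ℝ | TFeasible E s d h ∧ (∀ p, ∃ n : ℤ, h p = n) ∧ TValue h = m} with hI
  have hconv : Convex ℝ P := by
    rintro x ⟨⟨x1, x2, x3, x4⟩, x5⟩ y ⟨⟨y1, y2, y3, y4⟩, y5⟩ a b ha hb hab
    refine ⟨⟨?_, ?_, ?_, ?_⟩, ?_⟩
    · intro p
      exact add_nonneg (mul_nonneg ha (x1 p)) (mul_nonneg hb (y1 p))
    · intro p hp; simp [x2 p hp, y2 p hp]
    · intro i
      simp only [Pi.add_apply, Pi.smul_apply, smul_eq_mul, Finset.sum_add_distrib,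
        ← Finset.mul_sum]
      calc _ ≤ a * (s i : ℝ) + b * s i := by gcongr; exacts [x3 i, y3 i]
        _ = s i := by rw [← add_mul, hab, one_mul]
    · intro i
      simp only [Pi.add_apply, Pi.smul_apply, smul_eq_mul, Finset.sum_add_distrib,
        ← Finset.mul_sum]
      calc _ ≤ a * (d i : ℝ) + b * d i := by gcongr; exacts [x4 i, y4 i]
        _ = d i := by rw [← add_mul, hab, one_mul]
    · simp only [TValue, Pi.add_apply, Pi.smul_apply, smul_eq_mul, Finset.sum_add_distrib,
        ← Finset.mul_sum] at x5 y5 ⊢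
      rw [x5, y5, ← add_mul, hab, one_mul]
  have hcl : IsClosed P := by
    simp only [P, TFeasible, TValue, Set.ofPred_and, Set.ofPred_forall]
    refine IsClosed.inter (IsClosed.inter ?_ (IsClosed.inter ?_ (IsClosed.inter ?_ ?_))) ?_
    · exact isClosed_iInter fun p => isClosed_le (by fun_prop) (by fun_prop)
    · exact isClosed_iInter fun p => isClosed_iInter fun _ =>
        isClosed_eq (by fun_prop) (by fun_prop)
    · exact isClosed_iInter fun p => isClosed_le (by fun_prop) (by fun_prop)
    · exact isClosed_iInter fun p => isClosed_le (by fun_prop) (by fun_prop)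
    · exact isClosed_eq (by fun_prop) (by fun_prop)
  have hcomp : IsCompact P := by
    refine IsCompact.of_isClosed_subset (isCompact_univ_pi
      (fun p : S × D => isCompact_Icc (a := (0 : ℝ)) (b := s p.1))) hcl ?_
    rintro x ⟨hx, -⟩ p -
    exact ⟨hx.1 p, hx.le_s p⟩
  have hfin : I.Finite := by
    refine (Set.Finite.pi' (t := fun p : S × D =>
      ((fun n : ℤ => (n : ℝ)) '' Set.Icc 0 (s p.1 : ℤ)))
      (fun p => (Set.finite_Icc _ _).image _)).subset ?_
    rintro x ⟨hx, hx', -⟩ p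
    obtain ⟨n, hn⟩ := hx' p
    have h1 := hx.1 p
    have h2 := hx.le_s p
    rw [hn] at h1 h2
    exact ⟨n, ⟨by exact_mod_cast h1, by exact_mod_cast h2⟩, hn.symm⟩
  have hsub : P.extremePoints ℝ ⊆ I := by
    intro x hx
    obtain ⟨hxP, hext⟩ := mem_extremePoints.1 hx
    refine ⟨hxP.1, ?_, hxP.2⟩
    by_contra hne
    push Not at hne
    obtain ⟨h, hh0, hp, hn⟩ := aux_ext E s d x hxP.1 (by simpa using hne)
    have v1 := hm.2 ⟨_, hp, rfl⟩
    have v2 := hm.2 ⟨_, hn, rfl⟩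
    have v3 := hxP.2
    have v4 : TValue (x + h) = TValue x + TValue h := by simp [TValue, Finset.sum_add_distrib]
    have v5 : TValue (x - h) = TValue x - TValue h := by simp [TValue]
    have := (hext (x + h) ⟨hp, by linarith⟩ (x - h) ⟨hn, by linarith⟩
      ⟨1/2, 1/2, by norm_num, by norm_num, by norm_num, by ext p; simp; ring⟩).1
    exact hh0 (by simpa using this)
  have hKM := closure_convexHull_extremePoints hcomp hconv
  have hgP : g ∈ closure (convexHull ℝ (P.extremePoints ℝ)) := by
    rw [hKM]; exact ⟨hg, hgm⟩
  exact closure_minimal (convexHull_mono hsub) (hfin.isClosed_convexHull ℝ) hgP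
end

section
/- Define F(λ), for λ ≥ 0, as the maximum of Σ_{(i,j)} g(i,j) over all functions g : S × D → ℝ with g(i,j) ≥ 0, g(i,j) = 0 whenever (i,j) ∉ E, Σ_{j ∈ D} g(i,j) ≤ min(λ, s_i) for every i ∈ S, and Σ_{i ∈ S} g(i,j) ≤ d_j for every j ∈ D. Then F is weakly increasing and concave on [0, ∞). -/
/-- the parametric maximum-flow function `F(λ)`, where supplier `i`'s capacity is
`min (λ, s i)`, is weakly increasing and concave on `[0, ∞)`. -/
theorem stmt_9 {S D : Type*} [Fintype S] [Fintype D] (E : Set (S × D))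
    (s : S → ℝ) (d : D → ℝ) (hs : ∀ i, 0 ≤ s i) (hd : ∀ j, 0 ≤ d j)
    (F : ℝ → ℝ)
    (hF : ∀ lam : ℝ, 0 ≤ lam →
      IsGreatest {t : ℝ | ∃ g : S × D → ℝ,
        (∀ p, 0 ≤ g p) ∧ (∀ p, p ∉ E → g p = 0) ∧
        (∀ i, ∑ j, g (i, j) ≤ min lam (s i)) ∧
        (∀ j, ∑ i, g (i, j) ≤ d j) ∧
        t = ∑ p, g p} (F lam)) :
    MonotoneOn F (Set.Ici 0) ∧ ConcaveOn ℝ (Set.Ici 0) F := by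
  constructor
  · intro x hx y hy hxy
    obtain ⟨g, h0, hE, h1, h2, ht⟩ := (hF x hx).1
    exact (hF y hy).2 ⟨g, h0, hE,
      fun i => (h1 i).trans (min_le_min_right _ hxy), h2, ht⟩
  · refine ⟨convex_Ici 0, ?_⟩
    intro x hx y hy a b ha hb hab
    obtain ⟨g, g0, gE, g1, g2, gt⟩ := (hF x hx).1
    obtain ⟨h, h0, hE, h1, h2, ht⟩ := (hF y hy).1
    have hz : (0 : ℝ) ≤ a • x + b • y := (convex_Ici (0 : ℝ)) hx hy ha hb hab
    refine (hF _ hz).2 ⟨fun p => a * g p + b * h p, ?_, ?_, ?_, ?_, ?_⟩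
    · intro p
      exact add_nonneg (mul_nonneg ha (g0 p)) (mul_nonneg hb (h0 p))
    · intro p hp
      simp [gE p hp, hE p hp]
    · intro i
      simp only [Finset.sum_add_distrib, ← Finset.mul_sum, smul_eq_mul]
      obtain ⟨u1, u2⟩ := le_min_iff.1 (g1 i)
      obtain ⟨v1, v2⟩ := le_min_iff.1 (h1 i)
      refine le_min (add_le_add (mul_le_mul_of_nonneg_left u1 ha)
        (mul_le_mul_of_nonneg_left v1 hb)) ?_
      calc _ ≤ a * s i + b * s i := add_le_add (mul_le_mul_of_nonneg_left u2 ha)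
            (mul_le_mul_of_nonneg_left v2 hb)
        _ = s i := by rw [← add_mul, hab, one_mul]
    · intro j
      simp only [Finset.sum_add_distrib, ← Finset.mul_sum]
      calc _ ≤ a * d j + b * d j := add_le_add (mul_le_mul_of_nonneg_left (g2 j) ha)
            (mul_le_mul_of_nonneg_left (h2 j) hb)
        _ = d j := by rw [← add_mul, hab, one_mul]
    · simp only [Finset.sum_add_distrib, ← Finset.mul_sum, smul_eq_mul, gt, ht]
end

section
/- For every rule M on the triangle there exist a peak profile b : {a,b,c} → ℕ, a vertex i, an alternative report b'_i ∈ ℕ, and a utility function u single-peaked with peak b_i, such that u(x_i(M(b'))) > u(x_i(M(b))), where b' agrees with b on the other two vertices and equals b'_i at i. Consequently, no rule selecting Pareto optimal (maximum) b-matchings is peak strategyproof. -/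
variable {V : Type*} [Fintype V] [DecidableEq V]

/-- `u : ℕ → ℝ` is single-peaked with peak `p`. -/
def SinglePeaked (u : ℕ → ℝ) (p : ℕ) : Prop :=
  (∀ x' x : ℕ, x' < x → x ≤ p → u x' < u x) ∧
  (∀ x x' : ℕ, p ≤ x → x < x' → u x' < u x)

theorem edges3 : (⊤ : SimpleGraph (Fin 3)).edgeFinset = {s(0,1), s(0,2), s(1,2)} := by decide

theorem util3 (f : Sym2 (Fin 3) → ℕ) :
    bmUtil (⊤ : SimpleGraph (Fin 3)) f 0 = f s(0,1) + f s(0,2) ∧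
    bmUtil (⊤ : SimpleGraph (Fin 3)) f 1 = f s(0,1) + f s(1,2) ∧
    bmUtil (⊤ : SimpleGraph (Fin 3)) f 2 = f s(0,2) + f s(1,2) := by
  have h0 : (⊤ : SimpleGraph (Fin 3)).edgeFinset.filter (fun e => (0 : Fin 3) ∈ e)
      = {s(0,1), s(0,2)} := by decide
  have h1 : (⊤ : SimpleGraph (Fin 3)).edgeFinset.filter (fun e => (1 : Fin 3) ∈ e)
      = {s(0,1), s(1,2)} := by decide
  have h2 : (⊤ : SimpleGraph (Fin 3)).edgeFinset.filter (fun e => (2 : Fin 3) ∈ e)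
      = {s(0,2), s(1,2)} := by decide
  unfold bmUtil
  rw [h0, h1, h2]
  refine ⟨Finset.sum_pair (by decide), Finset.sum_pair (by decide), Finset.sum_pair (by decide)⟩

theorem size3 (f : Sym2 (Fin 3) → ℕ) :
    bmSize (⊤ : SimpleGraph (Fin 3)) f = f s(0,1) + f s(0,2) + f s(1,2) := by
  unfold bmSize
  rw [edges3, Finset.sum_insert (by decide), Finset.sum_pair (by decide), add_assoc]

/-- Two of the three edges at capacity one, the edge avoiding `i` at zero. -/
def star3 (i : Fin 3) (e : Sym2 (Fin 3)) : ℕ := if i ∈ e then 1 else 0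

/-- If the loser at the all-ones profile reports two, it receives two units. -/
theorem report_two (f : Sym2 (Fin 3) → ℕ) (i : Fin 3)
    (h : IsMaxBM (⊤ : SimpleGraph (Fin 3)) (Function.update (fun _ => 1) i 2) f) :
    bmUtil (⊤ : SimpleGraph (Fin 3)) f i = 2 := by
  obtain ⟨hf, hm⟩ := h
  have h2 := hm (star3 i) (by
    clear hf hm
    intro j
    revert i j
    decide)
  have a0 := hf 0
  have a1 := hf 1
  have a2 := hf 2
  obtain ⟨u0, u1, u2⟩ := util3 f
  rw [size3, size3] at h2
  rw [u0] at a0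
  rw [u1] at a1
  rw [u2] at a2
  fin_cases i <;> simp [star3, Function.update] at * <;> omega

/-- no rule selecting maximum b-matchings on the triangle is peak strategyproof:
for every such rule there are a peak profile, a vertex, a misreport, and a single-peaked utility
function under which the misreport is strictly profitable. -/
theorem stmt_10 (M : (Fin 3 → ℕ) → (Sym2 (Fin 3) → ℕ))
    (hM : ∀ b : Fin 3 → ℕ, IsMaxBM (⊤ : SimpleGraph (Fin 3)) b (M b)) :
    ∃ (b : Fin 3 → ℕ) (i : Fin 3) (b'i : ℕ) (u : ℕ → ℝ),
      SinglePeaked u (b i) ∧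
      u (bmUtil (⊤ : SimpleGraph (Fin 3)) (M (Function.update b i b'i)) i) >
        u (bmUtil (⊤ : SimpleGraph (Fin 3)) (M b) i) := by
  have key : ∃ i, bmUtil (⊤ : SimpleGraph (Fin 3)) (M (fun _ => 1)) i = 0 := by
    have hf := (hM (fun _ => 1)).1
    have a0 := hf 0
    have a1 := hf 1
    have a2 := hf 2
    by_contra hc
    push Not at hc
    have c0 := hc 0
    have c1 := hc 1
    have c2 := hc 2
    obtain ⟨u0, u1, u2⟩ := util3 (M (fun _ => 1))
    dsimp only at a0 a1 a2
    omega
  obtain ⟨i, hi⟩ := key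
  refine ⟨fun _ => 1, i, 2, fun x => if x = 0 then -10 else -(x : ℝ), ⟨?_, ?_⟩, ?_⟩
  · intro x' x h1 h2
    dsimp only at h2
    obtain rfl : x = 1 := by omega
    obtain rfl : x' = 0 := by omega
    norm_num
  · intro x x' h1 h2
    dsimp only at h1
    have e1 : x ≠ 0 := by omega
    have e2 : x' ≠ 0 := by omega
    simpa [e1, e2] using h2
  · rw [hi, report_two _ i (hM _)]
    norm_num
end

section
/- Define, for every subset S ⊆ V, the rank r(S) to be the maximum over all feasible b-matchings f of G of Σ_{i ∈ S} x_i(f). Then r is submodular: for all S, T ⊆ V, r(S ∪ T) + r(S ∩ T) ≤ r(S) + r(T). -/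
variable {V : Type*} [Fintype V] [DecidableEq V]

/-- Distance between two b-matchings. -/
def bmDist (G : SimpleGraph V) [DecidableRel G.Adj] (g f : Sym2 V → ℕ) : ℕ :=
  ∑ e ∈ G.edgeFinset, ((f e - g e) + (g e - f e))

/-- Adding one to the edge `e`. -/
def bmInc (f : Sym2 V → ℕ) (e : Sym2 V) : Sym2 V → ℕ :=
  fun e' => f e' + if e' = e then 1 else 0

lemma bmUtil_inc (G : SimpleGraph V) [DecidableRel G.Adj] (f : Sym2 V → ℕ) {v u : V}
    (h : G.Adj v u) (i : V) :
    bmUtil G (bmInc f s(v, u)) i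
      = bmUtil G f i + (if i = v then 1 else 0) + (if i = u then 1 else 0) := by
  have hne := h.ne
  unfold bmUtil bmInc
  rw [Finset.sum_add_distrib, Finset.sum_ite_eq']
  simp only [Finset.mem_filter, SimpleGraph.mem_edgeFinset, SimpleGraph.mem_edgeSet, h, true_and,
    Sym2.mem_iff]
  split_ifs <;> simp_all

lemma bmDist_lt (G : SimpleGraph V) [DecidableRel G.Adj] (g f f' : Sym2 V → ℕ) {e : Sym2 V}
    (he : e ∈ G.edgeFinset) (h1 : ∀ e', e' ≠ e → f' e' = f e')
    (h2 : (f' e - g e) + (g e - f' e) < (f e - g e) + (g e - f e)) :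
    bmDist G g f' < bmDist G g f := by
  unfold bmDist
  apply Finset.sum_lt_sum
  · intro e' _
    by_cases h : e' = e
    · subst h; exact h2.le
    · rw [h1 e' h]
  · exact ⟨e, he, h2⟩

lemma exists_edge_lt (G : SimpleGraph V) [DecidableRel G.Adj] (f g : Sym2 V → ℕ) (v : V)
    (h : bmUtil G f v < bmUtil G g v) : ∃ u, G.Adj v u ∧ f s(v, u) < g s(v, u) := by
  obtain ⟨e, he, hlt⟩ := Finset.exists_lt_of_sum_lt h
  simp only [Finset.mem_filter, SimpleGraph.mem_edgeFinset] at he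
  obtain ⟨he, u, rfl⟩ := he
  exact ⟨u, he, hlt⟩

lemma bm_exchange_s15 (G : SimpleGraph V) [DecidableRel G.Adj] (g : Sym2 V → ℕ) (n : ℕ) :
    ∀ (f : Sym2 V → ℕ) (v : V), bmDist G g f = n → bmUtil G f v < bmUtil G g v →
    ∃ f', bmDist G g f' < bmDist G g f ∧ ∃ z,
      ((∀ i, bmUtil G f' i
          = bmUtil G f i + (if i = v then 1 else 0) + (if i = z then 1 else 0)) ∧
        bmUtil G f z + (if z = v then 1 else 0) < bmUtil G g z) ∨
      ((∀ i, bmUtil G f' i + (if i = z then 1 else 0)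
          = bmUtil G f i + (if i = v then 1 else 0)) ∧
        bmUtil G g z < bmUtil G f z + (if z = v then 1 else 0)) := by
  induction n using Nat.strong_induction_on with
  | _ n ih =>
  intro f v hn hv
  obtain ⟨u, hvu, hfu⟩ := exists_edge_lt G f g v hv
  have U1 := bmUtil_inc G f hvu
  have D1 : bmDist G g (bmInc f s(v, u)) < bmDist G g f := by
    apply bmDist_lt G g f _ (e := s(v, u)) (by simpa using hvu)
    · intro e' h; simp [bmInc, h]
    · simp only [bmInc, if_true]; omega
  generalize bmInc f s(v, u) = f1 at U1 D1
  by_cases hu : bmUtil G f u + (if u = v then 1 else 0) < bmUtil G g u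
  · exact ⟨f1, D1, u, Or.inl ⟨U1, hu⟩⟩
  have hu1 : bmUtil G g u < bmUtil G f1 u := by
    have := U1 u
    simp only [if_true] at this
    omega
  obtain ⟨w, huw, hgw⟩ := exists_edge_lt G g f1 u hu1
  obtain ⟨f2, hf2⟩ : ∃ f2, f1 = bmInc f2 s(u, w) := by
    refine ⟨fun e => f1 e - if e = s(u, w) then 1 else 0, ?_⟩
    funext e
    simp only [bmInc]
    split_ifs with h
    · subst h; omega
    · rfl
  have U2 := bmUtil_inc G f2 huw
  rw [← hf2] at U2
  have D2 : bmDist G g f2 < bmDist G g f1 := by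
    apply bmDist_lt G g f1 _ (e := s(u, w)) (by simpa using huw)
    · intro e' h; simp [hf2, bmInc, h]
    · have : f1 s(u, w) = f2 s(u, w) + 1 := by simp [hf2, bmInc]
      omega
  have U3 : ∀ i, bmUtil G f2 i + (if i = w then 1 else 0)
      = bmUtil G f i + (if i = v then 1 else 0) := by
    intro i
    have := U1 i
    have := U2 i
    omega
  by_cases hw : bmUtil G g w < bmUtil G f w + (if w = v then 1 else 0)
  · exact ⟨f2, D2.trans D1, w, Or.inr ⟨U3, hw⟩⟩
  have hw2 : bmUtil G f2 w < bmUtil G g w := by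
    have := U3 w
    simp only [if_true] at this
    omega
  obtain ⟨f', D', z, h⟩ := ih _ (hn ▸ D2.trans D1) f2 w rfl hw2
  refine ⟨f', D'.trans (D2.trans D1), z, ?_⟩
  simp only [U3] at h
  exact h

lemma bm_common (G : SimpleGraph V) [DecidableRel G.Adj] (b : V → ℕ) (g : Sym2 V → ℕ)
    (hg : BMFeasible G b g) (A B : Finset V) (hAB : A ⊆ B) (n : ℕ) :
    ∀ f, bmDist G g f = n → BMFeasible G b f → ∃ h, BMFeasible G b h ∧
      ∑ i ∈ A, bmUtil G g i ≤ ∑ i ∈ A, bmUtil G h i ∧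
      ∑ i ∈ B, bmUtil G f i ≤ ∑ i ∈ B, bmUtil G h i := by
  induction n using Nat.strong_induction_on with
  | _ n ih =>
  intro f hn hf
  by_cases hA : ∑ i ∈ A, bmUtil G g i ≤ ∑ i ∈ A, bmUtil G f i
  · exact ⟨f, hf, hA, le_rfl⟩
  obtain ⟨v, hvA, hv⟩ := Finset.exists_lt_of_sum_lt (not_le.mp hA)
  obtain ⟨f', D, z, h⟩ := bm_exchange_s15 G g _ f v rfl hv
  have key : BMFeasible G b f' ∧ ∑ i ∈ B, bmUtil G f i ≤ ∑ i ∈ B, bmUtil G f' i := by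
    rcases h with ⟨h, hz⟩ | ⟨h, hz⟩
    · constructor
      · intro i
        have h1 := h i
        have h2 := hf i
        have h3 := hg i
        by_cases hiz : i = z
        · subst hiz
          simp only [if_true] at h1
          omega
        · by_cases hiv : i = v
          · subst hiv
            simp only [if_true, if_neg hiz] at h1
            omega
          · simp only [if_neg hiz, if_neg hiv] at h1
            omega
      · apply Finset.sum_le_sum
        intro i _
        have := h i
        omega
    · constructor
      · intro i
        have h1 := h i
        have h2 := hf i
        have h3 := hg i
        by_cases hiv : i = v
        · subst hiv
          simp only [if_true] at h1
          omega
        · simp only [if_neg hiv] at h1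
          omega
      · have hs := Finset.sum_congr (rfl : B = B) (fun i _ => h i)
        rw [Finset.sum_add_distrib, Finset.sum_add_distrib, Finset.sum_ite_eq',
          Finset.sum_ite_eq', if_pos (hAB hvA)] at hs
        split_ifs at hs <;> omega
  obtain ⟨k, hk, hkA, hkB⟩ := ih _ (hn ▸ D) f' rfl key.1
  exact ⟨k, hk, hkA, key.2.trans hkB⟩

/-- the rank function `r S = max_f ∑_{i ∈ S} x_i(f)` over feasible b-matchings
is submodular. -/
theorem stmt_15 (G : SimpleGraph V) [DecidableRel G.Adj] (b : V → ℕ)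
    (r : Finset V → ℕ)
    (hr : ∀ S : Finset V,
      IsGreatest {t : ℕ | ∃ f : Sym2 V → ℕ, BMFeasible G b f ∧ t = ∑ i ∈ S, bmUtil G f i} (r S)) :
    ∀ S T : Finset V, r (S ∪ T) + r (S ∩ T) ≤ r S + r T := by
  intro S T
  obtain ⟨f, hf, hfr⟩ := (hr (S ∪ T)).1
  obtain ⟨g, hg, hgr⟩ := (hr (S ∩ T)).1
  obtain ⟨h, hh, h1, h2⟩ := bm_common G b g hg (S ∩ T) (S ∪ T)
    (Finset.inter_subset_left.trans Finset.subset_union_left) _ f rfl hf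
  have hS := (hr S).2 ⟨h, hh, rfl⟩
  have hT := (hr T).2 ⟨h, hh, rfl⟩
  have := Finset.sum_union_inter (s₁ := S) (s₂ := T) (f := bmUtil G h)
  omega
end

section
/- Let A ⊆ ℝ^n be a convex set and suppose z, w ∈ A each Lorenz dominate every element of A. Then z = w; that is, a convex set admits at most one Lorenz dominant element. -/
/-- `σ_k(z)`: the sum of the `k` smallest coordinates of `z`, i.e. the minimum of
`∑_{i ∈ K} z i` over `k`-element subsets `K`. -/
noncomputable def lorenzSum (n : ℕ) (z : Fin n → ℝ) (k : ℕ) : ℝ :=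
  sInf {t : ℝ | ∃ K : Finset (Fin n), K.card = k ∧ t = ∑ i ∈ K, z i}

/-- `z` Lorenz dominates `w`: `σ_k(z) ≥ σ_k(w)` for every `1 ≤ k ≤ n`. -/
def LorenzDom (n : ℕ) (z w : Fin n → ℝ) : Prop :=
  ∀ k : ℕ, 1 ≤ k → k ≤ n → lorenzSum n w k ≤ lorenzSum n z k

theorem lorenzSum_le (n : ℕ) (z : Fin n → ℝ) (K : Finset (Fin n)) :
    lorenzSum n z K.card ≤ ∑ i ∈ K, z i := by
  apply csInf_le
  · apply Set.Finite.bddBelow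
    apply (Set.finite_range (fun K : Finset (Fin n) => ∑ i ∈ K, z i)).subset
    rintro t ⟨L, -, rfl⟩
    exact ⟨L, rfl⟩
  · exact ⟨K, rfl, rfl⟩

theorem lorenzSum_eq (n : ℕ) (m : Fin n → ℝ) (K : Finset (Fin n)) (c : ℝ)
    (h1 : ∀ i ∈ K, m i ≤ c) (h2 : ∀ i, i ∉ K → c ≤ m i) :
    ∑ i ∈ K, m i ≤ lorenzSum n m K.card := by
  refine le_csInf (Set.nonempty_of_mem (x := ∑ i ∈ K, m i) ⟨K, rfl, rfl⟩) ?_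
  rintro t ⟨L, hL, rfl⟩
  have a : ∑ i ∈ K, (m i - c) ≤ ∑ i ∈ L, (m i - c) := by
    rw [← Finset.sum_inter_add_sum_sdiff K L, ← Finset.sum_inter_add_sum_sdiff L K,
      Finset.inter_comm L K]
    have b : ∑ i ∈ K \ L, (m i - c) ≤ 0 := Finset.sum_nonpos fun i hi => by
      linarith [h1 i (Finset.mem_sdiff.1 hi).1]
    have d : 0 ≤ ∑ i ∈ L \ K, (m i - c) := Finset.sum_nonneg fun i hi => by
      linarith [h2 i (Finset.mem_sdiff.1 hi).2]
    linarith
  simp only [Finset.sum_sub_distrib, Finset.sum_const, hL] at a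
  linarith

/-- a convex set admits at most one Lorenz dominant element. -/
theorem stmt_17 (n : ℕ) (A : Set (Fin n → ℝ)) (hA : Convex ℝ A)
    (z w : Fin n → ℝ) (hz : z ∈ A) (hw : w ∈ A)
    (hzd : ∀ a ∈ A, LorenzDom n z a) (hwd : ∀ a ∈ A, LorenzDom n w a) :
    z = w := by
  have key : ∀ (K : Finset (Fin n)) (c : ℝ), (∀ i ∈ K, z i + w i ≤ c) →
      (∀ i, i ∉ K → c ≤ z i + w i) → ∑ i ∈ K, z i = ∑ i ∈ K, w i := by
    intro K c h1 h2
    rcases K.eq_empty_or_nonempty with rfl | hK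
    · simp
    have k1 : 1 ≤ K.card := hK.card_pos
    have k2 : K.card ≤ n := by simpa using K.card_le_univ
    have hm : (1/2 : ℝ) • z + (1/2 : ℝ) • w ∈ A :=
      hA hz hw (by norm_num) (by norm_num) (by norm_num)
    have e1 := hzd _ hm _ k1 k2
    have e2 := hwd _ hm _ k1 k2
    have e3 := lorenzSum_eq n ((1/2 : ℝ) • z + (1/2 : ℝ) • w) K (c/2)
      (fun i hi => by have := h1 i hi; simp; linarith)
      (fun i hi => by have := h2 i hi; simp; linarith)
    have e4 := lorenzSum_le n z K
    have e5 := lorenzSum_le n w K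
    have e6 : ∑ i ∈ K, ((1/2 : ℝ) • z + (1/2 : ℝ) • w) i
        = (1/2) * ∑ i ∈ K, z i + (1/2) * ∑ i ∈ K, w i := by
      simp [Finset.sum_add_distrib, Finset.mul_sum]
    have e7 := hzd w hw _ k1 k2
    have e8 := hwd z hz _ k1 k2
    linarith
  funext j
  let K : Finset (Fin n) := Finset.univ.filter fun i => z i + w i < z j + w j
  have hj : j ∉ K := by simp [K]
  have a := key K (z j + w j) (fun i hi => by simp [K] at hi; exact hi.le)
    (fun i hi => by simpa [K] using hi)
  have b := key (insert j K) (z j + w j)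
    (fun i hi => by
      rcases Finset.mem_insert.1 hi with rfl | hi
      · exact le_rfl
      · simp [K] at hi; exact hi.le)
    (fun i hi => by
      have : i ∉ K := fun h => hi (Finset.mem_insert_of_mem h)
      simpa [K] using this)
  rw [Finset.sum_insert hj, Finset.sum_insert hj] at b
  linarith
end
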